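/- arXiv:2511.12157 — 2 statements merged into one kernel-verified Lean document; each statement's English description precedes it below -/
import Mathlib

section
/- Consider the Kullback–Leibler fidelity F with N ≥ 1, y ∈ ℤ^M_{≥0}, b ∈ ℝ^M_{>0} and A ∈ ℝ^{M×N}_{≥0}. For any nonempty compact set X ⊆ ℝ^N_{≥0} and any constant C > 0, there exist x ∈ X and x' ∈ ℝ^N_{≥0} with x ≠ x' and ‖x − x'‖₀ ≤ 1 such that ⟨∇F(x) − ∇F(x'), x − x'⟩ < C‖x − x'‖₂². Consequently, for every K ≥ 1, F does not satisfy the BRSC property with respect to Φ = (1/2)‖·‖₂², X, and K with any positive constant. -/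
/-!
On the nonnegative orthant each partial derivative `∂ᵢF(x) = ∑ⱼ (1 - yⱼ / ([Ax]ⱼ + bⱼ)) Aⱼᵢ` is
bounded above by `∑ⱼ Aⱼᵢ`. Along the ray `x' = x + t eᵢ` the symmetric Bregman divergence
`(∂ᵢF(x') - ∂ᵢF(x)) t` therefore grows at most linearly in `t`, whereas `C ‖x - x'‖₂² = C t²`.
-/

open Classical

noncomputable section

/-- `‖x‖₀`: the number of nonzero entries of a vector. -/
def norm0 {ι : Type*} [Fintype ι] (x : ι → ℝ) : ℕ :=
  (Finset.univ.filter fun i => x i ≠ 0).card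

/-- Euclidean inner product on `ι → ℝ`. -/
def dotp {ι : Type*} [Fintype ι] (x y : ι → ℝ) : ℝ := ∑ i, x i * y i

/-- squared Euclidean norm. -/
def sqnorm {ι : Type*} [Fintype ι] (x : ι → ℝ) : ℝ := ∑ i, (x i) ^ 2

/-- Euclidean norm. -/
def enorm2 {ι : Type*} [Fintype ι] (x : ι → ℝ) : ℝ := Real.sqrt (sqnorm x)

/-- gradient via the Fréchet derivative: `(grad F x) i = ∂F/∂x_i(x)`. -/
def grad {ι : Type*} [Fintype ι] [DecidableEq ι] (F : (ι → ℝ) → ℝ) (x : ι → ℝ) : ι → ℝ :=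
  fun i => fderiv ℝ F x (Pi.single i 1)

/-- `F` satisfies the Bregman Restricted Strong Convexity property with respect to `Φ`,
the set `X`, and the integer `K`, with constant `C`.  The set `D` stands for the common
interior of the domains of `F` and `Φ`. -/
def BRSC {n : Type*} [Fintype n] [DecidableEq n]
    (F Φ : (n → ℝ) → ℝ) (X D : Set (n → ℝ)) (K : ℕ) (C : ℝ) : Prop :=
  ∀ x ∈ X, ∀ x' ∈ D, x ≠ x' → norm0 (x - x') ≤ K →
    C * dotp (grad Φ x - grad Φ x') (x - x') ≤ dotp (grad F x - grad F x') (x - x')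

/-- the Kullback--Leibler fidelity term `F(x) = Σ_j ([Ax]_j + b_j + y_j log(y_j/([Ax]_j+b_j)) - y_j)`
(with the convention `y_j log (y_j / ·) = 0` when `y_j = 0`, automatic here since `0 * _ = 0`). -/
def FKL {M N : ℕ} (A : Matrix (Fin M) (Fin N) ℝ) (b : Fin M → ℝ) (y : Fin M → ℕ)
    (x : Fin N → ℝ) : ℝ :=
  ∑ j, (A.mulVec x j + b j + (y j : ℝ) * Real.log ((y j : ℝ) / (A.mulVec x j + b j)) - (y j : ℝ))

section Vector

variable {ι : Type*}

lemma dotp_self [Fintype ι] (x : ι → ℝ) : dotp x x = sqnorm x :=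
  Finset.sum_congr rfl fun _ _ => (sq _).symm

variable [DecidableEq ι]

lemma sub_add_single {G : Type*} [AddCommGroup G] (x : ι → G) (i : ι) (t : G) :
    x - (x + Pi.single i t) = Pi.single i (-t) := by
  rw [sub_add_cancel_left, Pi.single_neg]

variable [Fintype ι]

lemma dotp_single (v : ι → ℝ) (i : ι) (t : ℝ) : dotp v (Pi.single i t) = v i * t :=
  dotProduct_single v t i

lemma sqnorm_single (i : ι) (t : ℝ) : sqnorm (Pi.single i t) = t ^ 2 := by
  rw [← dotp_self, dotp_single, Pi.single_eq_same, sq]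

lemma norm0_single_le_one (i : ι) (t : ℝ) : norm0 (Pi.single i t) ≤ 1 := by
  have hsupp : (Finset.univ.filter fun k => (Pi.single i t : ι → ℝ) k ≠ 0) ⊆ {i} := by
    intro k hk
    rw [Finset.mem_filter_univ, Pi.single_apply, ne_eq, ite_eq_right_iff] at hk
    exact Finset.mem_singleton.mpr (Classical.not_imp.mp hk).1
  exact Finset.card_le_card hsupp

lemma grad_half_sqnorm (x : ι → ℝ) : grad (fun z => (1 / 2) * sqnorm z) x = x := by
  have hcoord (k : ι) : HasFDerivAt (fun z : ι → ℝ => z k)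
      (ContinuousLinearMap.proj k : (ι → ℝ) →L[ℝ] ℝ) x :=
    hasFDerivAt_apply k x
  have hgrad := (HasFDerivAt.fun_sum fun k (_ : k ∈ Finset.univ) => (hcoord k).pow 2).const_mul
    (1 / 2 : ℝ)
  funext i
  unfold grad sqnorm
  rw [hgrad.fderiv]
  simp [Pi.single_apply]

end Vector

section RestrictedStrongConvexity

variable {ι : Type*} [Fintype ι] [DecidableEq ι] {F : (ι → ℝ) → ℝ}

lemma not_BRSC_of_dotp_lt_mul_sqnorm {X D : Set (ι → ℝ)} {K : ℕ} {C : ℝ} {x x' : ι → ℝ}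
    (hx : x ∈ X) (hx' : x' ∈ D) (hne : x ≠ x') (hK : norm0 (x - x') ≤ K)
    (hlt : dotp (grad F x - grad F x') (x - x') < C * sqnorm (x - x')) :
    ¬ BRSC F (fun z => (1 / 2) * sqnorm z) X D K C := by
  intro h
  have hle := h x hx x' hx' hne hK
  rw [grad_half_sqnorm, grad_half_sqnorm, dotp_self] at hle
  exact hlt.not_ge hle

lemma dotp_grad_sub_add_single (x : ι → ℝ) (i : ι) (t : ℝ) :
    dotp (grad F x - grad F (x + Pi.single i t)) (x - (x + Pi.single i t)) =
      (grad F (x + Pi.single i t) i - grad F x i) * t := by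
  rw [sub_add_single, dotp_single, Pi.sub_apply]
  ring

lemma exists_dotp_grad_sub_lt_mul_sqnorm_of_grad_le {x : ι → ℝ} {i : ι} {B C : ℝ} (hC : 0 < C)
    (hB : ∀ t, 0 < t → grad F (x + Pi.single i t) i ≤ B) :
    ∃ t, 0 < t ∧ dotp (grad F x - grad F (x + Pi.single i t)) (x - (x + Pi.single i t)) <
      C * sqnorm (x - (x + Pi.single i t)) := by
  obtain ⟨t, ht⟩ := exists_gt (max 0 ((B - grad F x i) / C))
  obtain ⟨ht0, htB⟩ := max_lt_iff.mp ht
  refine ⟨t, ht0, ?_⟩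
  rw [dotp_grad_sub_add_single, sub_add_single, sqnorm_single]
  calc (grad F (x + Pi.single i t) i - grad F x i) * t
      ≤ (B - grad F x i) * t := by gcongr; exact hB t ht0
    _ < C * t * t := by gcongr; exact (div_lt_iff₀' hC).mp htB
    _ = C * (-t) ^ 2 := by ring

end RestrictedStrongConvexity

section KullbackLeibler

/-- The scalar Kullback--Leibler divergence of a prediction `s` from an observation `v`, that is,
the contribution of one measurement to `FKL`. It is meant for `0 ≤ v` and `0 < s`; at
`v = 0` the logarithmic term vanishes. -/
def scalarKL (v s : ℝ) : ℝ := s + v * Real.log (v / s) - v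

lemma hasDerivAt_scalarKL (v : ℝ) {s : ℝ} (hs : s ≠ 0) :
    HasDerivAt (scalarKL v) (1 - v / s) s := by
  unfold scalarKL
  rcases eq_or_ne v 0 with rfl | hv
  · simpa using hasDerivAt_id' s
  · have hlog : HasDerivAt (fun u => Real.log (v / u)) (-s⁻¹) s := by
      refine (((hasDerivAt_inv hs).const_mul v).log (by positivity)).congr_deriv ?_
      field_simp
    refine (((hasDerivAt_id s).add (hlog.const_mul v)).sub_const v).congr_deriv ?_
    ring

lemma mulVec_add_pos {κ ι : Type*} [Fintype ι] {A : Matrix κ ι ℝ} {b : κ → ℝ} {x : ι → ℝ}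
    (hA : ∀ j i, 0 ≤ A j i) (hb : ∀ j, 0 < b j) (hx : ∀ i, 0 ≤ x i) (j : κ) :
    0 < A.mulVec x j + b j :=
  add_pos_of_nonneg_of_pos (dotProduct_nonneg_of_nonneg (hA j) hx) (hb j)

variable {M N : ℕ} {A : Matrix (Fin M) (Fin N) ℝ} {b : Fin M → ℝ} {x : Fin N → ℝ}

lemma FKL_eq_sum_scalarKL (A : Matrix (Fin M) (Fin N) ℝ) (b : Fin M → ℝ) (y : Fin M → ℕ) :
    FKL A b y = fun x => ∑ j, scalarKL (y j) (A.mulVec x j + b j) := by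
  funext x
  exact Finset.sum_congr rfl fun j _ => by rw [scalarKL]

lemma grad_FKL_apply (y : Fin M → ℕ) (hx : ∀ j, A.mulVec x j + b j ≠ 0) (i : Fin N) :
    grad (FKL A b y) x i = ∑ j, (1 - (y j : ℝ) / (A.mulVec x j + b j)) * A j i := by
  let row (j : Fin M) : (Fin N → ℝ) →L[ℝ] ℝ :=
    (ContinuousLinearMap.proj j).comp (LinearMap.toContinuousLinearMap A.mulVecLin)
  have hrow (j : Fin M) : HasFDerivAt (fun z => A.mulVec z j + b j) (row j) x :=
    (row j).hasFDerivAt.add_const (b j)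
  have hFKL : HasFDerivAt (FKL A b y)
      (∑ j, (1 - (y j : ℝ) / (A.mulVec x j + b j)) • row j) x := by
    have hterm (j : Fin M) := (hasDerivAt_scalarKL (y j) (hx j)).comp_hasFDerivAt x (hrow j)
    rw [FKL_eq_sum_scalarKL]
    exact HasFDerivAt.fun_sum fun j _ => hterm j
  unfold grad
  rw [hFKL.fderiv]
  simp [row]

lemma grad_FKL_apply_le_sum (y : Fin M → ℕ) (hx : ∀ j, 0 < A.mulVec x j + b j) {i : Fin N}
    (hA : ∀ j, 0 ≤ A j i) : grad (FKL A b y) x i ≤ ∑ j, A j i := by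
  rw [grad_FKL_apply y fun j => (hx j).ne']
  refine Finset.sum_le_sum fun j _ => mul_le_of_le_one_left (hA j) (sub_le_self 1 ?_)
  exact div_nonneg (y j).cast_nonneg (hx j).le

lemma exists_dotp_grad_FKL_sub_lt_mul_sqnorm (hA : ∀ j i, 0 ≤ A j i) (hb : ∀ j, 0 < b j)
    (y : Fin M → ℕ) (hx : ∀ i, 0 ≤ x i) (i : Fin N) {C : ℝ} (hC : 0 < C) :
    ∃ x' : Fin N → ℝ, (∀ k, 0 ≤ x' k) ∧ x ≠ x' ∧ norm0 (x - x') ≤ 1 ∧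
      dotp (grad (FKL A b y) x - grad (FKL A b y) x') (x - x') < C * sqnorm (x - x') := by
  have hray {t : ℝ} (ht : 0 < t) : 0 ≤ x + Pi.single i t :=
    add_nonneg hx (Pi.single_nonneg.mpr ht.le)
  have hgrad (t : ℝ) (ht : 0 < t) : grad (FKL A b y) (x + Pi.single i t) i ≤ ∑ j, A j i :=
    grad_FKL_apply_le_sum y (mulVec_add_pos hA hb (hray ht)) fun j => hA j i
  obtain ⟨t, ht, hlt⟩ := exists_dotp_grad_sub_lt_mul_sqnorm_of_grad_le hC hgrad
  have hne : x ≠ x + Pi.single i t := by simpa using ht.ne'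
  have hcard : norm0 (x - (x + Pi.single i t)) ≤ 1 := by
    rw [sub_add_single]
    exact norm0_single_le_one i (-t)
  exact ⟨_, hray ht, hne, hcard, hlt⟩

end KullbackLeibler

theorem stmt3_general {M N : ℕ} (hN : 0 < N)
    (A : Matrix (Fin M) (Fin N) ℝ) (hA : ∀ j i, 0 ≤ A j i)
    (b : Fin M → ℝ) (hb : ∀ j, 0 < b j) (y : Fin M → ℕ)
    (X : Set (Fin N → ℝ)) (hXsub : X ⊆ {x | ∀ i, 0 ≤ x i}) (hXne : X.Nonempty) :
    (∀ C : ℝ, 0 < C → ∃ x ∈ X, ∃ x' : Fin N → ℝ, (∀ i, 0 ≤ x' i) ∧ x ≠ x' ∧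
        norm0 (x - x') ≤ 1 ∧
        dotp (grad (FKL A b y) x - grad (FKL A b y) x') (x - x') < C * sqnorm (x - x')) ∧
    (∀ K : ℕ, 1 ≤ K → ∀ C : ℝ, 0 < C →
        ¬ BRSC (FKL A b y) (fun x => (1 / 2) * sqnorm x) X {x | ∀ i, 0 ≤ x i} K C) := by
  obtain ⟨x, hxX⟩ := hXne
  have hexists (C : ℝ) (hC : 0 < C) :=
    exists_dotp_grad_FKL_sub_lt_mul_sqnorm hA hb y (hXsub hxX) ⟨0, hN⟩ hC
  refine ⟨fun C hC => ⟨x, hxX, hexists C hC⟩, fun K hK C hC => ?_⟩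
  obtain ⟨x', hx', hne, hcard, hlt⟩ := hexists C hC
  exact not_BRSC_of_dotp_lt_mul_sqnorm hxX hx' hne (hcard.trans hK) hlt

/-- the KL fidelity does not satisfy the RSC/BRSC property with
`Φ = (1/2)‖·‖₂²` on any nonempty compact `X ⊆ ℝ^N_{≥0}`. -/
theorem stmt3 {M N : ℕ} (hN : 0 < N)
    (A : Matrix (Fin M) (Fin N) ℝ) (hA : ∀ j i, 0 ≤ A j i)
    (b : Fin M → ℝ) (hb : ∀ j, 0 < b j) (y : Fin M → ℕ)
    (X : Set (Fin N → ℝ)) (hXsub : X ⊆ {x | ∀ i, 0 ≤ x i})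
    (hXne : X.Nonempty) (hXcomp : IsCompact X) :
    (∀ C : ℝ, 0 < C → ∃ x ∈ X, ∃ x' : Fin N → ℝ, (∀ i, 0 ≤ x' i) ∧ x ≠ x' ∧
        norm0 (x - x') ≤ 1 ∧
        dotp (grad (FKL A b y) x - grad (FKL A b y) x') (x - x') < C * sqnorm (x - x')) ∧
    (∀ K : ℕ, 1 ≤ K → ∀ C : ℝ, 0 < C →
        ¬ BRSC (FKL A b y) (fun x => (1 / 2) * sqnorm x) X {x | ∀ i, 0 ≤ x i} K C) :=
  stmt3_general hN A hA b hb y X hXsub hXne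
end
end

section
/- Assume F := G_y(A·) satisfies the BRSC property with respect to Ψ, a set X ⊆ C^N, and K, with constant C_K > 0, and that the concavity condition (CC) holds. Let x ∈ X be a critical point of J_Ψ such that for every i, |z_i(x)| does not belong to [C_K(ψ_i'(α_i) − ψ_i'(0)) + ψ_i'(0), (ψ_i'(α_i) − ψ_i'(0))/C_K + ψ_i'(0)], and suppose 1 + K − 2‖x‖₀ > 0 and λ₀ > F(x)/(1 + K − 2‖x‖₀). Then x is the unique global minimizer of J_Ψ over C^N (and also the unique global minimizer of J₀), and every critical point x' ∈ C^N of J_Ψ with x' ≠ x satisfies ‖x' − x‖₀ > K. -/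
open Classical

noncomputable section

/-- one-dimensional Bregman divergence `d_ψ(x, x') = ψ(x) - ψ(x') - ψ'(x')(x - x')`,
with the derivative `dψ` of `ψ` given as data. -/
def dBreg (ψ dψ : ℝ → ℝ) (x x' : ℝ) : ℝ := ψ x - ψ x' - dψ x' * (x - x')

/-- The data-fidelity setting of the paper (Assumption 1.3): a separable fidelity term
`G_y(w) = Σ_j g_j(w_j)` where each `g j` is nonnegative, strictly convex, twice
differentiable on the interior of its domain, with an `L`-Lipschitz derivative `dg j`;
a matrix `A`; and the constraint set `𝒞` equal to `ℝ` or `ℝ_{≥0}`. -/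
structure FidSetting (M N : ℕ) where
  𝒞 : Set ℝ
  h𝒞 : 𝒞 = Set.univ ∨ 𝒞 = Set.Ici 0
  A : Matrix (Fin M) (Fin N) ℝ
  domg : Fin M → Set ℝ
  g : Fin M → ℝ → ℝ
  dg : Fin M → ℝ → ℝ
  L : ℝ
  hL : 0 < L
  hdom : ∀ x : Fin N → ℝ, (∀ i, x i ∈ 𝒞) → ∀ j, (A.mulVec x) j ∈ interior (domg j)
  hg_nonneg : ∀ j, ∀ w ∈ domg j, 0 ≤ g j w
  hg_sconv : ∀ j, StrictConvexOn ℝ (domg j) (g j)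
  hg_deriv : ∀ j, ∀ w ∈ interior (domg j), HasDerivAt (g j) (dg j w) w
  hg_deriv2 : ∀ j, ∀ w ∈ interior (domg j), DifferentiableAt ℝ (dg j) w
  hg_lip : ∀ j, ∀ w ∈ domg j, ∀ v ∈ domg j, |dg j w - dg j v| ≤ L * |w - v|

/-- the feasible set `𝒞^N`. -/
def FidSetting.feas {M N : ℕ} (S : FidSetting M N) : Set (Fin N → ℝ) :=
  {x | ∀ i, x i ∈ S.𝒞}

/-- the data term `F(x) = G_y(Ax)`. -/
def FidSetting.F {M N : ℕ} (S : FidSetting M N) (x : Fin N → ℝ) : ℝ :=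
  ∑ j, S.g j (S.A.mulVec x j)

/-- the gradient `∇F(x) = Aᵀ ∇G_y(Ax)`. -/
def FidSetting.gradF {M N : ℕ} (S : FidSetting M N) (x : Fin N → ℝ) : Fin N → ℝ :=
  fun i => ∑ j, S.A j i * S.dg j (S.A.mulVec x j)

/-- the Bregman-generating setting (Definition 3.1 of the paper): `Ψ(x) = Σ_i ψ_i(x_i)`
with each `ψ_i` strictly convex, twice differentiable, `t ↦ ψ_i'(t)t - ψ_i(t)` coercive,
and `ψ_i'` odd when `𝒞 = ℝ` (resp. `ψ_i'(0) ≥ 0` when `𝒞 = ℝ_{≥0}`). -/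
structure PsiSetting (N : ℕ) (𝒞 : Set ℝ) where
  ψ : Fin N → ℝ → ℝ
  dψ : Fin N → ℝ → ℝ
  hconv : ∀ i, StrictConvexOn ℝ 𝒞 (ψ i)
  hderiv : ∀ i, ∀ t ∈ 𝒞, HasDerivWithinAt (ψ i) (dψ i t) 𝒞 t
  hderiv2 : ∀ i, ∀ t ∈ interior 𝒞, DifferentiableAt ℝ (dψ i) t
  hcoer : ∀ i, ∀ c : ℝ, ∃ R : ℝ, ∀ t ∈ 𝒞, R ≤ |t| → c ≤ dψ i t * t - ψ i t
  hodd : 𝒞 = Set.univ → ∀ i t, dψ i (-t) = -(dψ i t)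
  hnn : 𝒞 = Set.Ici 0 → ∀ i, 0 ≤ dψ i 0

/-- `∇Ψ(x)`. -/
def PsiSetting.gradPsi {N : ℕ} {𝒞 : Set ℝ} (P : PsiSetting N 𝒞) (x : Fin N → ℝ) :
    Fin N → ℝ :=
  fun i => P.dψ i (x i)

/-- the scalar B-rex penalty `β_{ψ_i}`. -/
def betaPen {N : ℕ} {𝒞 : Set ℝ} (P : PsiSetting N 𝒞) (α : Fin N → ℝ) (lam0 : ℝ)
    (i : Fin N) (t : ℝ) : ℝ :=
  if |t| ≤ α i then P.ψ i 0 - P.ψ i t + Real.sign t * P.dψ i (α i) * t else lam0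

/-- the relaxed objective `J_Ψ(x) = G_y(Ax) + B_Ψ(x)`. -/
def JPsi {M N : ℕ} (S : FidSetting M N) (P : PsiSetting N S.𝒞) (α : Fin N → ℝ) (lam0 : ℝ)
    (x : Fin N → ℝ) : ℝ :=
  S.F x + ∑ i, betaPen P α lam0 i (x i)

/-- the `ℓ₀`-regularized objective `J₀(x) = G_y(Ax) + λ₀‖x‖₀`. -/
def J0 {M N : ℕ} (S : FidSetting M N) (lam0 : ℝ) (x : Fin N → ℝ) : ℝ :=
  S.F x + lam0 * (norm0 x : ℝ)

/-- the subdifferential `∂h_i` of `h_i = β_{ψ_i} + ψ_i` (closed form). -/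
def subdiffH (𝒞 : Set ℝ) (dψ : ℝ → ℝ) (α : ℝ) (t : ℝ) : Set ℝ :=
  if 𝒞 = Set.univ then
    if t = 0 then Set.Icc (-(dψ α)) (dψ α)
    else if |t| ≤ α then {Real.sign t * dψ α}
    else {dψ t}
  else
    if t ≤ α then {dψ α} else {dψ t}

/-- `z(x) = ∇Ψ(x) - Aᵀ∇G_y(Ax)`. -/
def zmap {M N : ℕ} (S : FidSetting M N) (P : PsiSetting N S.𝒞) (x : Fin N → ℝ) :
    Fin N → ℝ :=
  fun i => P.dψ i (x i) - S.gradF x i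

/-- `x ∈ 𝒞^N` is a critical point of `J_Ψ` iff `z_i(x) ∈ ∂h_i(x_i)` for every `i`. -/
def IsCritical {M N : ℕ} (S : FidSetting M N) (P : PsiSetting N S.𝒞) (α : Fin N → ℝ)
    (x : Fin N → ℝ) : Prop :=
  x ∈ S.feas ∧ ∀ i, zmap S P x i ∈ subdiffH S.𝒞 (P.dψ i) (α i) (x i)

/-- `F = G_y(A·)` satisfies BRSC with respect to `Ψ`, `X`, `K`, with constant `CK`. -/
def BRSCholds {M N : ℕ} (S : FidSetting M N) (P : PsiSetting N S.𝒞)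
    (X : Set (Fin N → ℝ)) (K : ℕ) (CK : ℝ) : Prop :=
  ∀ x ∈ X, ∀ x' ∈ S.feas, x ≠ x' → norm0 (x - x') ≤ K →
    CK * dotp (P.gradPsi x - P.gradPsi x') (x - x')
      ≤ dotp (S.gradF x - S.gradF x') (x - x')

/-- the concavity condition (CC). -/
def CCond {M N : ℕ} (S : FidSetting M N) (P : PsiSetting N S.𝒞) (α : Fin N → ℝ)
    (lam0 : ℝ) : Prop :=
  ∀ x ∈ S.feas, ∀ i : Fin N,
    StrictConcaveOn ℝ (Set.Ioo (-(α i)) 0) (fun t => JPsi S P α lam0 (Function.update x i t)) ∧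
    StrictConcaveOn ℝ (Set.Ioo 0 (α i)) (fun t => JPsi S P α lam0 (Function.update x i t))

/-
The interval excluded for `|z|` makes each coordinate of `x` either zero, with dual variable well
inside the subdifferential, or beyond the threshold with room to spare. In both cases the growth
`CK * dBreg` granted by restricted strong convexity along the segment to `y` beats the concavity of
the penalty, one coordinate at a time, so `x` beats every `y` with `‖x - y‖₀ ≤ K`; the same
comparison of slopes excludes other critical points there. A point `y` farther away whose
penalty is the full `ℓ₀` penalty has at least `1 + K - ‖x‖₀` nonzero entries, hence loses to `x` by
the bound on `lam`. Any other `y` has a coordinate inside a branch `(0, α)` or `(-α, 0)`;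
concavity there lets it be pushed to an end of the branch, which reduces to the previous cases.
-/

open Set

section Bregman

theorem dBreg_self (ψ dψ : ℝ → ℝ) (t : ℝ) : dBreg ψ dψ t t = 0 := by
  simp [dBreg]

theorem dBreg_add_dBreg_comm (ψ dψ : ℝ → ℝ) (s t : ℝ) :
    dBreg ψ dψ s t + dBreg ψ dψ t s = (dψ s - dψ t) * (s - t) := by
  unfold dBreg; ring

theorem dBreg_three_point (ψ dψ : ℝ → ℝ) (s t u : ℝ) :
    dBreg ψ dψ s u = dBreg ψ dψ s t + dBreg ψ dψ t u + (dψ t - dψ u) * (s - t) := by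
  unfold dBreg; ring

theorem hasDerivWithinAt_dBreg_left {C : Set ℝ} {ψ dψ : ℝ → ℝ} {t : ℝ}
    (hψ : HasDerivWithinAt ψ (dψ t) C t) (u : ℝ) :
    HasDerivWithinAt (fun s => dBreg ψ dψ s u) (dψ t - dψ u) C t := by
  simpa only [dBreg, mul_one, id] using
    (hψ.sub_const (ψ u)).fun_sub (((hasDerivWithinAt_id t C).sub_const u).const_mul (dψ u))

end Bregman

/-- A Bregman-generating function `ψ` on `C ∈ {ℝ, ℝ≥0}` with derivative `dψ`, without the coercivity
and second-order regularity of `PsiSetting`. -/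
structure BregmanGenerator (C : Set ℝ) (ψ dψ : ℝ → ℝ) : Prop where
  eq_univ_or_eq_Ici : C = univ ∨ C = Ici 0
  strictConvexOn : StrictConvexOn ℝ C ψ
  hasDerivWithinAt : ∀ t ∈ C, HasDerivWithinAt ψ (dψ t) C t
  deriv_neg : C = univ → ∀ t, dψ (-t) = -dψ t
  deriv_zero_nonneg : 0 ≤ dψ 0

namespace BregmanGenerator

variable {C : Set ℝ} {ψ dψ : ℝ → ℝ} {s t : ℝ}

theorem mem_of_nonneg (h : BregmanGenerator C ψ dψ) (ht : 0 ≤ t) : t ∈ C := by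
  rcases h.eq_univ_or_eq_Ici with rfl | rfl
  · exact mem_univ t
  · exact ht

theorem nonneg_or_neg (h : BregmanGenerator C ψ dψ) (ht : t ∈ C) :
    0 ≤ t ∨ C = univ ∧ t < 0 := by
  rcases h.eq_univ_or_eq_Ici with hC | rfl
  · exact (le_or_gt 0 t).imp_right fun ht0 => ⟨hC, ht0⟩
  · exact .inl ht

theorem dBreg_pos (h : BregmanGenerator C ψ dψ) (hs : s ∈ C) (ht : t ∈ C) (hne : s ≠ t) :
    0 < dBreg ψ dψ s t := by
  unfold dBreg
  rcases hne.lt_or_gt with hst | hts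
  · have := h.strictConvexOn.slope_lt_of_hasDerivWithinAt hs ht hst (h.hasDerivWithinAt t ht)
    rw [slope_def_field, div_lt_iff₀ (sub_pos.2 hst)] at this
    linarith
  · have := h.strictConvexOn.lt_slope_of_hasDerivWithinAt ht hs hts (h.hasDerivWithinAt t ht)
    rw [slope_def_field, lt_div_iff₀ (sub_pos.2 hts)] at this
    linarith

theorem dBreg_nonneg (h : BregmanGenerator C ψ dψ) (hs : s ∈ C) (ht : t ∈ C) :
    0 ≤ dBreg ψ dψ s t := by
  rcases eq_or_ne s t with rfl | hne
  · exact (dBreg_self ψ dψ s).ge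
  · exact (h.dBreg_pos hs ht hne).le

theorem deriv_sub_mul_sub_pos (h : BregmanGenerator C ψ dψ) (hs : s ∈ C) (ht : t ∈ C)
    (hne : s ≠ t) : 0 < (dψ s - dψ t) * (s - t) := by
  rw [← dBreg_add_dBreg_comm ψ]
  exact add_pos (h.dBreg_pos hs ht hne) (h.dBreg_pos ht hs hne.symm)

theorem strictMonoOn_deriv (h : BregmanGenerator C ψ dψ) : StrictMonoOn dψ C := by
  intro s hs t ht hst
  have := h.deriv_sub_mul_sub_pos ht hs hst.ne'
  exact sub_pos.1 (pos_of_mul_pos_left this (sub_pos.2 hst).le)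

theorem deriv_zero (h : BregmanGenerator C ψ dψ) (hC : C = univ) : dψ 0 = 0 := by
  have := h.deriv_neg hC 0
  rw [neg_zero] at this
  linarith

theorem deriv_nonneg (h : BregmanGenerator C ψ dψ) (ht : 0 ≤ t) : 0 ≤ dψ t :=
  h.deriv_zero_nonneg.trans
    (h.strictMonoOn_deriv.monotoneOn (h.mem_of_nonneg le_rfl) (h.mem_of_nonneg ht) ht)

theorem apply_neg (h : BregmanGenerator C ψ dψ) (hC : C = univ) (t : ℝ) : ψ (-t) = ψ t := by
  have hψ (s : ℝ) : HasDerivAt ψ (dψ s) s :=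
    (h.hasDerivWithinAt s (hC ▸ mem_univ s)).hasDerivAt (by simp [hC])
  have hodd (s : ℝ) : HasDerivAt (fun s => ψ (-s) - ψ s) 0 s := by
    have := ((hψ (-s)).comp s (hasDerivAt_neg s)).sub (hψ s)
    rwa [h.deriv_neg hC, neg_mul_neg, mul_one, sub_self] at this
  have := is_const_of_deriv_eq_zero (fun s => (hodd s).differentiableAt)
    (fun s => (hodd s).deriv) t 0
  rwa [neg_zero, sub_self, sub_eq_zero] at this

theorem apply_abs (h : BregmanGenerator C ψ dψ) (ht : t ∈ C) : ψ |t| = ψ t := by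
  rcases h.nonneg_or_neg ht with ht0 | ⟨hC, ht0⟩
  · rw [abs_of_nonneg ht0]
  · rw [abs_of_neg ht0, h.apply_neg hC]

theorem dBreg_neg_neg (h : BregmanGenerator C ψ dψ) (hC : C = univ) (s t : ℝ) :
    dBreg ψ dψ (-s) (-t) = dBreg ψ dψ s t := by
  simp only [dBreg, h.apply_neg hC, h.deriv_neg hC]
  ring

theorem dBreg_abs_le (h : BregmanGenerator C ψ dψ) (hs : s ∈ C) (ht : 0 ≤ t) :
    dBreg ψ dψ |s| t ≤ dBreg ψ dψ s t := by
  unfold dBreg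
  rw [h.apply_abs hs]
  gcongr
  · exact h.deriv_nonneg ht
  · exact le_abs_self s

end BregmanGenerator

section Penalty

/-- The scalar B-rex penalty `β_ψ` with threshold `α`; `betaPen` is its `i`-th instance. -/
def brexPenalty (ψ dψ : ℝ → ℝ) (α lam t : ℝ) : ℝ :=
  if |t| ≤ α then ψ 0 - ψ t + Real.sign t * dψ α * t else lam

/-- A Bregman generator together with the threshold `α` at which its B-rex penalty reaches the
level `lam`. -/
structure BrexThreshold (C : Set ℝ) (ψ dψ : ℝ → ℝ) (α lam : ℝ) : Prop
    extends BregmanGenerator C ψ dψ where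
  pos : 0 < α
  dBreg_zero : dBreg ψ dψ 0 α = lam

variable {C : Set ℝ} {ψ dψ : ℝ → ℝ} {α lam t : ℝ}

theorem brexPenalty_of_abs_le (ht : |t| ≤ α) :
    brexPenalty ψ dψ α lam t = ψ 0 - ψ t + dψ α * |t| := by
  have hsign : Real.sign t * t = |t| := by
    rcases lt_trichotomy t 0 with h | rfl | h
    · rw [Real.sign_of_neg h, abs_of_neg h, neg_one_mul]
    · simp
    · rw [Real.sign_of_pos h, abs_of_pos h, one_mul]
  rw [brexPenalty, if_pos ht, ← hsign]
  ring

namespace BrexThreshold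

theorem mem (h : BrexThreshold C ψ dψ α lam) : α ∈ C :=
  h.mem_of_nonneg h.pos.le

theorem penalty_of_abs_le (h : BrexThreshold C ψ dψ α lam) (ht : t ∈ C) (hle : |t| ≤ α) :
    brexPenalty ψ dψ α lam t = lam - dBreg ψ dψ |t| α := by
  rw [brexPenalty_of_abs_le hle, ← h.dBreg_zero, dBreg, dBreg, h.apply_abs ht]
  ring

theorem penalty_of_le_abs (h : BrexThreshold C ψ dψ α lam) (ht : t ∈ C) (hle : α ≤ |t|) :
    brexPenalty ψ dψ α lam t = lam := by
  rcases hle.eq_or_lt with heq | hlt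
  · rw [h.penalty_of_abs_le ht heq.ge, ← heq, dBreg_self, sub_zero]
  · rw [brexPenalty, if_neg hlt.not_ge]

theorem penalty_zero (h : BrexThreshold C ψ dψ α lam) : brexPenalty ψ dψ α lam 0 = 0 := by
  rw [brexPenalty_of_abs_le (by simpa using h.pos.le)]
  simp

theorem penalty_le (h : BrexThreshold C ψ dψ α lam) (ht : t ∈ C) :
    brexPenalty ψ dψ α lam t ≤ lam := by
  rcases le_total |t| α with hle | hle
  · rw [h.penalty_of_abs_le ht hle]
    exact sub_le_self _ (h.dBreg_nonneg (h.mem_of_nonneg (abs_nonneg t)) h.mem)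
  · exact (h.penalty_of_le_abs ht hle).le

theorem penalty_neg (h : BrexThreshold C ψ dψ α lam) (hC : C = univ) (t : ℝ) :
    brexPenalty ψ dψ α lam (-t) = brexPenalty ψ dψ α lam t := by
  simp only [brexPenalty, abs_neg, Real.sign_neg, h.apply_neg hC, neg_mul, mul_neg, neg_neg]

theorem penalty_nonneg (h : BrexThreshold C ψ dψ α lam) (ht : t ∈ C) :
    0 ≤ brexPenalty ψ dψ α lam t := by
  have h0 : (0 : ℝ) ∈ C := h.mem_of_nonneg le_rfl
  have habs : |t| ∈ C := h.mem_of_nonneg (abs_nonneg t)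
  rcases le_total |t| α with hle | hle
  · rw [brexPenalty_of_abs_le hle, ← h.apply_abs ht]
    have hbreg := h.dBreg_nonneg h0 habs
    have hmono : dψ |t| * |t| ≤ dψ α * |t| :=
      mul_le_mul_of_nonneg_right (h.strictMonoOn_deriv.monotoneOn habs h.mem hle) (abs_nonneg t)
    unfold dBreg at hbreg
    linarith
  · rw [h.penalty_of_le_abs ht hle, ← h.dBreg_zero]
    exact h.dBreg_nonneg h0 h.mem

theorem add_mul_abs_le_penalty_add (h : BrexThreshold C ψ dψ α lam) (ht : t ∈ C) :
    ψ 0 + dψ α * |t| ≤ brexPenalty ψ dψ α lam t + ψ t := by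
  rcases le_total |t| α with hle | hle
  · rw [brexPenalty_of_abs_le hle]
    linarith
  · rw [h.penalty_of_le_abs ht hle, ← h.dBreg_zero, ← h.apply_abs ht]
    have := h.dBreg_nonneg (h.mem_of_nonneg (abs_nonneg t)) h.mem
    unfold dBreg at this ⊢
    linarith

end BrexThreshold

end Penalty

section Subdifferential

variable {C : Set ℝ} {ψ dψ : ℝ → ℝ} {α lam t w : ℝ}

namespace BrexThreshold

theorem eq_max_of_mem_subdiffH (h : BrexThreshold C ψ dψ α lam) (ht : 0 ≤ t)
    (hne : ¬(C = univ ∧ t = 0)) (hw : w ∈ subdiffH C dψ α t) : w = max (dψ α) (dψ t) := by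
  have hmax : max (dψ α) (dψ t) = if t ≤ α then dψ α else dψ t := by
    rw [← h.strictMonoOn_deriv.monotoneOn.map_max h.mem (h.mem_of_nonneg ht)]
    split_ifs with hle
    · rw [max_eq_left hle]
    · rw [max_eq_right (not_le.1 hle).le]
  rw [hmax]
  unfold subdiffH at hw
  by_cases hC : C = univ
  · have htpos : 0 < t := ht.lt_of_ne' fun h0 => hne ⟨hC, h0⟩
    simp only [hC, htpos.ne', abs_of_pos htpos, Real.sign_of_pos htpos, one_mul, if_true,
      if_false] at hw
    split_ifs at hw ⊢ <;> exact hw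
  · rw [if_neg hC] at hw
    split_ifs at hw ⊢ <;> exact hw

theorem le_of_mem_subdiffH_zero (h : BrexThreshold C ψ dψ α lam)
    (hw : w ∈ subdiffH C dψ α 0) : w ≤ dψ α := by
  unfold subdiffH at hw
  rw [if_pos rfl, if_pos h.pos.le] at hw
  split_ifs at hw
  · exact hw.2
  · exact (mem_singleton_iff.1 hw).le

theorem neg_mem_subdiffH (h : BrexThreshold C ψ dψ α lam) (hC : C = univ)
    (hw : w ∈ subdiffH C dψ α t) : -w ∈ subdiffH C dψ α (-t) := by
  unfold subdiffH at hw ⊢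
  simp only [if_pos hC, neg_eq_zero, abs_neg, Real.sign_neg, h.deriv_neg hC, neg_mul] at hw ⊢
  split_ifs at hw ⊢ with ht hle
  · exact ⟨neg_le_neg hw.2, neg_le.1 hw.1⟩
  · exact congrArg Neg.neg hw
  · exact congrArg Neg.neg hw

theorem eq_or_le_of_mem_subdiffH (h : BrexThreshold C ψ dψ α lam) (ht : t ∈ C)
    (hw : w ∈ subdiffH C dψ α t) :
    w = dψ t ∨ (t ≤ α ∧ w ≤ dψ t) ∨ (0 ≤ t ∧ t ≤ α ∧ w ≤ dψ α) := by
  rcases h.nonneg_or_neg ht with ht0 | ⟨hC, ht0⟩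
  · by_cases h0 : C = univ ∧ t = 0
    · obtain ⟨-, rfl⟩ := h0
      exact .inr <| .inr ⟨le_rfl, h.pos.le, h.le_of_mem_subdiffH_zero hw⟩
    · rw [h.eq_max_of_mem_subdiffH ht0 h0 hw]
      rcases le_total t α with hle | hle
      · have := h.strictMonoOn_deriv.monotoneOn ht h.mem hle
        exact .inr <| .inr ⟨ht0, hle, (max_eq_left this).le⟩
      · have := h.strictMonoOn_deriv.monotoneOn h.mem ht hle
        exact .inl (max_eq_right this)
  · have := h.eq_max_of_mem_subdiffH (neg_pos.2 ht0).le (fun h0 => ht0.ne (neg_eq_zero.1 h0.2))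
      (h.neg_mem_subdiffH hC hw)
    have hle : dψ (-t) ≤ -w := this ▸ le_max_right _ _
    rw [h.deriv_neg hC] at hle
    exact .inr <| .inl ⟨(ht0.trans h.pos).le, neg_le_neg_iff.1 hle⟩

theorem abs_le_of_mem_subdiffH_zero (hC : C = univ) (hw : w ∈ subdiffH C dψ α 0) :
    |w| ≤ dψ α := by
  rw [subdiffH, if_pos hC, if_pos rfl] at hw
  exact abs_le.2 hw

theorem max_mul_le_of_mem_subdiffH (h : BrexThreshold C ψ dψ α lam) (hC : C = univ) (hne : t ≠ 0)
    (hw : w ∈ subdiffH C dψ α t) : max (dψ α * |t|) (dψ t * t) ≤ w * t := by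
  rcases hne.lt_or_gt with ht | ht
  · have := h.eq_max_of_mem_subdiffH (neg_pos.2 ht).le (fun h0 => hne (neg_eq_zero.1 h0.2))
      (h.neg_mem_subdiffH hC hw)
    rw [h.deriv_neg hC] at this
    rw [abs_of_neg ht, ← neg_mul_neg w, this, max_mul_of_nonneg _ _ (neg_pos.2 ht).le,
      neg_mul_neg]
  · rw [h.eq_max_of_mem_subdiffH ht.le (fun h0 => hne h0.2) hw, abs_of_pos ht,
      max_mul_of_nonneg _ _ ht.le]

end BrexThreshold

end Subdifferential

section WellSeparated

variable {C : Set ℝ} {ψ dψ : ℝ → ℝ} {α lam CK t w x z : ℝ}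

/-- The scalar consequence of the exclusion interval on `|z|`: either the coordinate vanishes and
its dual variable `z` stays away from the ends of the subdifferential at `0`, or it lies beyond the
threshold with its derivative at least a factor `1 / CK` above the threshold slope. -/
def IsWellSeparated (C : Set ℝ) (dψ : ℝ → ℝ) (α CK x z : ℝ) : Prop :=
  (C = univ ∧ x = 0 ∧ CK ≤ 1 ∧ |z| < CK * dψ α) ∨
    (α < |x| ∧ z = dψ x ∧ dψ α - dψ 0 < CK * (dψ |x| - dψ 0))

theorem lt_mul_of_notMem_Icc {a b c : ℝ} (hc : 0 < c) (hab : a ≤ b)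
    (hb : b ∉ Icc (c * a) (a / c)) : a < c * b := by
  by_contra! hba
  have hle : b ≤ a / c := (le_div_iff₀' hc).2 hba
  refine hb ⟨?_, hle⟩
  have hca : c * a ≤ a := (mul_le_mul_of_nonneg_left hab hc.le).trans hba
  exact hca.trans hab

namespace BrexThreshold

theorem deriv_zero_lt (h : BrexThreshold C ψ dψ α lam) : dψ 0 < dψ α :=
  h.strictMonoOn_deriv (h.mem_of_nonneg le_rfl) h.mem h.pos

theorem isWellSeparated_zero (h : BrexThreshold C ψ dψ α lam) (hCK : 0 < CK) (hC : C = univ)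
    (hCK1 : CK ≤ 1) (hz : z ∈ subdiffH C dψ α 0)
    (hsep : |z| ∉ Icc (CK * (dψ α - dψ 0) + dψ 0) ((dψ α - dψ 0) / CK + dψ 0)) :
    IsWellSeparated C dψ α CK 0 z := by
  have hα : 0 < dψ α := h.deriv_zero_nonneg.trans_lt h.deriv_zero_lt
  rw [h.deriv_zero hC, sub_zero, add_zero, add_zero] at hsep
  refine .inl ⟨hC, rfl, hCK1, ?_⟩
  by_contra! hle
  exact hsep ⟨hle, (abs_le_of_mem_subdiffH_zero hC hz).trans
    ((le_div_iff₀ hCK).2 (mul_le_of_le_one_right hα.le hCK1))⟩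

theorem isWellSeparated_of_nonneg (h : BrexThreshold C ψ dψ α lam) (hCK : 0 < CK) (hx : 0 ≤ x)
    (hCK1 : |x| ≤ α → CK ≤ 1) (hz : z ∈ subdiffH C dψ α x)
    (hsep : |z| ∉ Icc (CK * (dψ α - dψ 0) + dψ 0) ((dψ α - dψ 0) / CK + dψ 0)) :
    IsWellSeparated C dψ α CK x z := by
  by_cases h0 : C = univ ∧ x = 0
  · obtain ⟨hC, rfl⟩ := h0
    exact h.isWellSeparated_zero hCK hC (hCK1 (by simpa using h.pos.le)) hz hsep
  have hzmax := h.eq_max_of_mem_subdiffH hx h0 hz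
  have hαz : dψ α ≤ z := hzmax ▸ le_max_left _ _
  have hα : 0 < dψ α - dψ 0 := sub_pos.2 h.deriv_zero_lt
  have hgap : dψ α - dψ 0 < CK * (z - dψ 0) := by
    refine lt_mul_of_notMem_Icc hCK (sub_le_sub_right hαz _) fun hmem => hsep ?_
    rw [abs_of_nonneg (h.deriv_nonneg h.pos.le |>.trans hαz)]
    exact ⟨le_sub_iff_add_le.1 hmem.1, sub_le_iff_le_add.1 hmem.2⟩
  have hxC : x ∈ C := h.mem_of_nonneg hx
  have hαx : α < x := by
    by_contra! hle
    rw [max_eq_left (h.strictMonoOn_deriv.monotoneOn hxC h.mem hle)] at hzmax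
    rw [hzmax] at hgap
    exact hgap.not_ge (mul_le_of_le_one_left hα.le (hCK1 (by rwa [abs_of_nonneg hx])))
  rw [max_eq_right (h.strictMonoOn_deriv.monotoneOn h.mem hxC hαx.le)] at hzmax
  rw [hzmax] at hgap
  exact .inr ⟨by rwa [abs_of_nonneg hx], hzmax, by rwa [abs_of_nonneg hx]⟩

theorem isWellSeparated_neg (h : BrexThreshold C ψ dψ α lam) (hC : C = univ)
    (hsep : IsWellSeparated C dψ α CK x z) : IsWellSeparated C dψ α CK (-x) (-z) := by
  rcases hsep with ⟨-, rfl, hCK1, hz⟩ | ⟨hx, rfl, hgap⟩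
  · exact .inl ⟨hC, neg_zero, hCK1, by rwa [abs_neg]⟩
  · exact .inr ⟨by rwa [abs_neg], (h.deriv_neg hC x).symm, by rwa [abs_neg]⟩

theorem isWellSeparated (h : BrexThreshold C ψ dψ α lam) (hCK : 0 < CK) (hx : x ∈ C)
    (hCK1 : |x| ≤ α → CK ≤ 1) (hz : z ∈ subdiffH C dψ α x)
    (hsep : |z| ∉ Icc (CK * (dψ α - dψ 0) + dψ 0) ((dψ α - dψ 0) / CK + dψ 0)) :
    IsWellSeparated C dψ α CK x z := by
  rcases h.nonneg_or_neg hx with hx0 | ⟨hC, hx0⟩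
  · exact h.isWellSeparated_of_nonneg hCK hx0 hCK1 hz hsep
  · have := h.isWellSeparated_of_nonneg hCK (neg_pos.2 hx0).le (by rwa [abs_neg])
      (h.neg_mem_subdiffH hC hz) (by rwa [abs_neg])
    simpa only [neg_neg] using h.isWellSeparated_neg hC this

theorem one_sub_mul_deriv_sub_lt (h : BrexThreshold C ψ dψ α lam) (hαx : α < x)
    (hgap : dψ α - dψ 0 < CK * (dψ x - dψ 0)) (ht : 0 ≤ t) (htα : t ≤ α) :
    (1 - CK) * (dψ x - dψ t) < dψ x - dψ α := by
  have hmono := h.strictMonoOn_deriv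
  have h0t : dψ 0 ≤ dψ t := hmono.monotoneOn (h.mem_of_nonneg le_rfl) (h.mem_of_nonneg ht) ht
  have htα : dψ t ≤ dψ α := hmono.monotoneOn (h.mem_of_nonneg ht) h.mem htα
  have hαx : dψ α < dψ x := hmono h.mem (h.mem_of_nonneg (h.pos.trans hαx).le) hαx
  rcases le_total CK 1 with hCK | hCK <;> nlinarith

theorem dBreg_threshold_lt (h : BrexThreshold C ψ dψ α lam) (hαx : α < x)
    (hgap : dψ α - dψ 0 < CK * (dψ x - dψ 0)) (ht : 0 ≤ t) (htα : t ≤ α) (hCK : 0 < CK) :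
    dBreg ψ dψ t α < CK * dBreg ψ dψ t x := by
  have htC : t ∈ C := h.mem_of_nonneg ht
  have hxC : x ∈ C := h.mem_of_nonneg (h.pos.trans hαx).le
  have hthree := dBreg_three_point ψ dψ t α x
  have hαx_pos : 0 < dBreg ψ dψ α x := h.dBreg_pos h.mem hxC hαx.ne
  have hslope : dψ α < dψ x := h.strictMonoOn_deriv h.mem hxC hαx
  rcases le_total CK 1 with hCK1 | hCK1
  · have hsymm := dBreg_add_dBreg_comm ψ dψ t α
    have hαt := h.dBreg_nonneg h.mem htC
    have hkey := mul_le_mul_of_nonneg_right (h.one_sub_mul_deriv_sub_lt hαx hgap ht htα).le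
      (sub_nonneg.2 htα)
    have hscale : (1 - CK) * (dBreg ψ dψ t x) ≤
        (1 - CK) * (dBreg ψ dψ α x + (dψ x - dψ t) * (α - t)) :=
      mul_le_mul_of_nonneg_left (by linarith) (sub_nonneg.2 hCK1)
    linarith [mul_pos hCK hαx_pos]
  · have hcross : 0 ≤ (dψ x - dψ α) * (α - t) :=
      mul_nonneg (sub_pos.2 hslope).le (sub_nonneg.2 htα)
    have htx := le_mul_of_one_le_left (h.dBreg_nonneg htC hxC) hCK1
    linarith

theorem growth_pos_of_lt (h : BrexThreshold C ψ dψ α lam) (hCK : 0 < CK) (hαx : α < x)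
    (hgap : dψ α - dψ 0 < CK * (dψ x - dψ 0)) (ht : t ∈ C) (hne : t ≠ x) :
    0 < CK * dBreg ψ dψ t x + (brexPenalty ψ dψ α lam t - brexPenalty ψ dψ α lam x) := by
  have hx0 : 0 < x := h.pos.trans hαx
  have hxC : x ∈ C := h.mem_of_nonneg hx0.le
  rw [h.penalty_of_le_abs hxC (hαx.le.trans (le_abs_self x))]
  rcases le_total α |t| with hle | hle
  · rw [h.penalty_of_le_abs ht hle, sub_self, add_zero]
    exact mul_pos hCK (h.dBreg_pos ht hxC hne)
  · rw [h.penalty_of_abs_le ht hle]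
    have hlt := h.dBreg_threshold_lt hαx hgap (abs_nonneg t) hle hCK
    have hreflect := mul_le_mul_of_nonneg_left (h.dBreg_abs_le ht hx0.le) hCK.le
    linarith

theorem growth_pos_of_zero (h : BrexThreshold C ψ dψ α lam) (hC : C = univ) (hCK : 0 < CK)
    (hCK1 : CK ≤ 1) (hz : |z| < CK * dψ α) (ht : t ∈ C) (hne : t ≠ 0) :
    0 < (dψ 0 - z) * (t - 0) + CK * dBreg ψ dψ t 0
      + (brexPenalty ψ dψ α lam t - brexPenalty ψ dψ α lam 0) := by
  have hzt : z * t < CK * dψ α * |t| :=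
    (le_abs_self _).trans_lt (abs_mul z t ▸ mul_lt_mul_of_pos_right hz (abs_pos.2 hne))
  have hpen := mul_nonneg (sub_nonneg.2 hCK1) (h.penalty_nonneg ht)
  have hgrow := mul_le_mul_of_nonneg_left (h.add_mul_abs_le_penalty_add ht) hCK.le
  rw [h.penalty_zero, dBreg, h.deriv_zero hC]
  linarith

theorem growth_pos (h : BrexThreshold C ψ dψ α lam) (hCK : 0 < CK) (hx : x ∈ C)
    (hsep : IsWellSeparated C dψ α CK x z) (ht : t ∈ C) (hne : t ≠ x) :
    0 < (dψ x - z) * (t - x) + CK * dBreg ψ dψ t x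
      + (brexPenalty ψ dψ α lam t - brexPenalty ψ dψ α lam x) := by
  rcases hsep with ⟨hC, rfl, hCK1, hz⟩ | ⟨hαx, rfl, hgap⟩
  · exact h.growth_pos_of_zero hC hCK hCK1 hz ht hne
  rw [sub_self, zero_mul, zero_add]
  rcases h.nonneg_or_neg hx with hx0 | ⟨hC, hx0⟩
  · rw [abs_of_nonneg hx0] at hαx hgap
    exact h.growth_pos_of_lt hCK hαx hgap ht hne
  · rw [abs_of_neg hx0] at hαx hgap
    have := h.growth_pos_of_lt hCK hαx hgap (hC ▸ mem_univ (-t)) (neg_injective.ne hne)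
    rwa [h.dBreg_neg_neg hC, h.penalty_neg hC, h.penalty_neg hC] at this

theorem critical_gap_of_lt (h : BrexThreshold C ψ dψ α lam) (hCK : 0 < CK) (hαx : α < x)
    (hgap : dψ α - dψ 0 < CK * (dψ x - dψ 0)) (ht : t ∈ C) (hne : t ≠ x)
    (hw : w ∈ subdiffH C dψ α t) :
    (1 - CK) * ((dψ x - dψ t) * (x - t)) < (dψ x - w) * (x - t) := by
  have hpos : 0 < CK * ((dψ x - dψ t) * (x - t)) :=
    mul_pos hCK (h.deriv_sub_mul_sub_pos (h.mem_of_nonneg (h.pos.trans hαx).le) ht hne.symm)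
  rcases h.eq_or_le_of_mem_subdiffH ht hw with rfl | ⟨htα, hwt⟩ | ⟨ht0, htα, hwα⟩
  · linarith
  · have htx : 0 < x - t := sub_pos.2 (htα.trans_lt hαx)
    have := mul_le_mul_of_nonneg_right (sub_le_sub_left hwt (dψ x)) htx.le
    linarith
  · have htx : 0 < x - t := sub_pos.2 (htα.trans_lt hαx)
    rw [← mul_assoc]
    exact mul_lt_mul_of_pos_right
      ((h.one_sub_mul_deriv_sub_lt hαx hgap ht0 htα).trans_le (sub_le_sub_left hwα _)) htx

theorem critical_gap_of_zero (h : BrexThreshold C ψ dψ α lam) (hC : C = univ) (hCK : 0 < CK)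
    (hCK1 : CK ≤ 1) (hz : |z| < CK * dψ α) (hne : t ≠ 0) (hw : w ∈ subdiffH C dψ α t) :
    (1 - CK) * ((dψ 0 - dψ t) * (0 - t)) < (z - w) * (0 - t) := by
  have hzt : z * t < CK * dψ α * |t| :=
    (le_abs_self _).trans_lt (abs_mul z t ▸ mul_lt_mul_of_pos_right hz (abs_pos.2 hne))
  obtain ⟨hwα, hwt⟩ := max_le_iff.1 (h.max_mul_le_of_mem_subdiffH hC hne hw)
  have hα := mul_le_mul_of_nonneg_left hwα hCK.le
  have ht := mul_le_mul_of_nonneg_left hwt (sub_nonneg.2 hCK1)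
  rw [h.deriv_zero hC]
  linarith

theorem critical_gap (h : BrexThreshold C ψ dψ α lam) (hCK : 0 < CK) (hx : x ∈ C)
    (hsep : IsWellSeparated C dψ α CK x z) (ht : t ∈ C) (hne : t ≠ x)
    (hw : w ∈ subdiffH C dψ α t) :
    (1 - CK) * ((dψ x - dψ t) * (x - t)) < (z - w) * (x - t) := by
  rcases hsep with ⟨hC, rfl, hCK1, hz⟩ | ⟨hαx, rfl, hgap⟩
  · exact h.critical_gap_of_zero hC hCK hCK1 hz hne hw
  rcases h.nonneg_or_neg hx with hx0 | ⟨hC, hx0⟩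
  · rw [abs_of_nonneg hx0] at hαx hgap
    exact h.critical_gap_of_lt hCK hαx hgap ht hne hw
  · rw [abs_of_neg hx0] at hαx hgap
    have := h.critical_gap_of_lt hCK hαx hgap (hC ▸ mem_univ (-t)) (neg_injective.ne hne)
      (h.neg_mem_subdiffH hC hw)
    rw [h.deriv_neg hC, h.deriv_neg hC] at this
    linarith

end BrexThreshold

end WellSeparated

section Sparsity

variable {ι : Type*} [Fintype ι] {x y : ι → ℝ}

theorem norm0_eq_hammingNorm (x : ι → ℝ) : norm0 x = hammingNorm x :=
  rfl

theorem norm0_sub_eq_hammingDist (x y : ι → ℝ) : norm0 (x - y) = hammingDist x y := by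
  rw [hammingDist_comm, hammingDist_eq_hammingNorm, neg_add_eq_sub, norm0_eq_hammingNorm]

theorem norm0_sub_comm (x y : ι → ℝ) : norm0 (x - y) = norm0 (y - x) := by
  rw [norm0_sub_eq_hammingDist, hammingDist_comm, norm0_sub_eq_hammingDist]

theorem norm0_sub_le (x y : ι → ℝ) : norm0 (x - y) ≤ norm0 x + norm0 y := by
  rw [norm0_sub_eq_hammingDist, norm0_eq_hammingNorm, norm0_eq_hammingNorm]
  simpa only [hammingDist_zero_left, hammingDist_zero_right] using hammingDist_triangle x 0 y

theorem norm0_le_norm0 (h : ∀ i, y i = 0 → x i = 0) : norm0 x ≤ norm0 y :=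
  Finset.card_le_card <| Finset.monotone_filter_right _ fun i _ => mt (h i)

theorem norm0_sub_update_le_one [DecidableEq ι] (x : ι → ℝ) (i : ι) (t : ℝ) :
    norm0 (x - Function.update x i t) ≤ 1 := by
  refine (Finset.card_le_card fun k hk => ?_).trans_eq (Finset.card_singleton i)
  by_contra hki
  simp [Function.update_of_ne (Finset.mem_singleton.not.1 hki)] at hk

theorem mul_norm0_eq_sum (lam : ℝ) (x : ι → ℝ) :
    lam * norm0 x = ∑ i, if x i = 0 then 0 else lam := by
  simp [norm0, Finset.sum_ite, mul_comm]

theorem sum_pos_of_ne {f : ι → ℝ} (hxy : y ≠ x) (heq : ∀ i, y i = x i → f i = 0)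
    (hne : ∀ i, y i ≠ x i → 0 < f i) : 0 < ∑ i, f i := by
  obtain ⟨k, hk⟩ := Function.ne_iff.1 hxy
  refine Finset.sum_pos' (fun i _ => ?_) ⟨k, Finset.mem_univ k, hne k hk⟩
  by_cases hi : y i = x i
  · exact (heq i hi).ge
  · exact (hne i hi).le

end Sparsity

section FeasibleSet

variable {ι : Type*} {C : Set ℝ} {x : ι → ℝ}

/-- The constraint set `C^ι`. -/
def feasibleSet (ι : Type*) (C : Set ℝ) : Set (ι → ℝ) :=
  {x | ∀ i, x i ∈ C}

theorem convex_feasibleSet (hC : Convex ℝ C) : Convex ℝ (feasibleSet ι C) :=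
  fun _ hx _ hy _ _ ha hb hab i => hC (hx i) (hy i) ha hb hab

theorem update_mem_feasibleSet [DecidableEq ι] (hx : x ∈ feasibleSet ι C) (i : ι) {t : ℝ}
    (ht : t ∈ C) : Function.update x i t ∈ feasibleSet ι C :=
  (Function.forall_update_iff x fun _ s => s ∈ C).2 ⟨ht, fun k _ => hx k⟩

end FeasibleSet

section Growth

variable {ι : Type*} [Fintype ι] {C : Set ℝ} {F : (ι → ℝ) → ℝ} {G : (ι → ℝ) → ι → ℝ}
  {ψ dψ : ι → ℝ → ℝ} {K : ℕ} {CK : ℝ} {x y : ι → ℝ}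

/-- The continuous linear functional `y ↦ ⟪v, y⟫`, which turns a gradient vector `v` into a Fréchet
derivative. -/
def dotpCLM (v : ι → ℝ) : (ι → ℝ) →L[ℝ] ℝ :=
  ∑ i, v i • ContinuousLinearMap.proj i

theorem dotpCLM_apply (v y : ι → ℝ) : dotpCLM v y = dotp v y := by
  simp [dotpCLM, dotp]

theorem hasFDerivWithinAt_sum_apply {f f' : ι → ℝ → ℝ}
    (hf : ∀ i, ∀ t ∈ C, HasDerivWithinAt (f i) (f' i t) C t) (hy : y ∈ feasibleSet ι C) :
    HasFDerivWithinAt (fun y => ∑ i, f i (y i)) (dotpCLM fun i => f' i (y i))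
      (feasibleSet ι C) y :=
  HasFDerivWithinAt.fun_sum fun i _ =>
    (hf i (y i) (hy i)).comp_hasFDerivWithinAt y (hasFDerivAt_apply i y).hasFDerivWithinAt
      fun _ hz => hz i

/-- The Bregman restricted strong convexity property at the single base point `x`, for a function
with gradient `G` and the separable generator with gradient `dψ`. -/
def BregmanRSCAt (C : Set ℝ) (G : (ι → ℝ) → ι → ℝ) (dψ : ι → ℝ → ℝ) (K : ℕ) (CK : ℝ)
    (x : ι → ℝ) : Prop :=
  ∀ y ∈ feasibleSet ι C, x ≠ y → norm0 (x - y) ≤ K →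
    CK * dotp ((fun i => dψ i (x i)) - fun i => dψ i (y i)) (x - y) ≤ dotp (G x - G y) (x - y)

theorem dotp_sub_left (u v w : ι → ℝ) : dotp (u - v) w = dotp u w - dotp v w :=
  sub_dotProduct u v w

theorem dotp_neg_smul_right (s : ℝ) (u v : ι → ℝ) : dotp u (-(s • v)) = -(s * dotp u v) :=
  (dotProduct_neg u (s • v)).trans (congrArg Neg.neg (dotProduct_smul s u v))

theorem BregmanRSCAt.dotp_le_along (h : BregmanRSCAt C G dψ K CK x) {v : ι → ℝ} {s : ℝ}
    (hs : 0 ≤ s) (hmem : x + s • v ∈ feasibleSet ι C) (hK : norm0 v ≤ K) :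
    CK * dotp ((fun i => dψ i ((x + s • v) i)) - fun i => dψ i (x i)) v
      ≤ dotp (G (x + s • v) - G x) v := by
  rcases eq_or_ne x (x + s • v) with heq | hne
  · rw [← heq, sub_self, sub_self]
    simp [dotp]
  have hdir : x - (x + s • v) = -(s • v) := sub_add_cancel_left x (s • v)
  have hspos : 0 < s := hs.lt_of_ne' fun h0 => hne (by simp [h0])
  have hsupp : norm0 (x - (x + s • v)) ≤ K :=
    (norm0_le_norm0 fun i hi => by simp [hi]).trans hK
  have hrsc := h _ hmem hne hsupp
  rw [hdir, dotp_neg_smul_right, dotp_neg_smul_right] at hrsc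
  refine le_of_mul_le_mul_left ?_ hspos
  simp only [dotp_sub_left] at hrsc ⊢
  linarith

theorem BregmanRSCAt.growth (h : BregmanRSCAt C G dψ K CK x) (hC : Convex ℝ C)
    (hF : ∀ y ∈ feasibleSet ι C, HasFDerivWithinAt F (dotpCLM (G y)) (feasibleSet ι C) y)
    (hψ : ∀ i, ∀ t ∈ C, HasDerivWithinAt (ψ i) (dψ i t) C t)
    (hx : x ∈ feasibleSet ι C) (hy : y ∈ feasibleSet ι C) (hK : norm0 (x - y) ≤ K) :
    F x + dotp (G x) (y - x) + CK * ∑ i, dBreg (ψ i) (dψ i) (y i) (x i) ≤ F y := by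
  have hderiv : ∀ z ∈ feasibleSet ι C, HasFDerivWithinAt
      (fun z => F z - CK * ∑ i, dBreg (ψ i) (dψ i) (z i) (x i))
      (dotpCLM (G z) - CK • dotpCLM fun i => dψ i (z i) - dψ i (x i)) (feasibleSet ι C) z :=
    fun z hz => (hF z hz).fun_sub <| HasFDerivWithinAt.const_mul
      (hasFDerivWithinAt_sum_apply
        (fun i t ht => hasDerivWithinAt_dBreg_left (hψ i t ht) (x i)) hz) CK
  obtain ⟨z, hz, hmvt⟩ := domain_mvt hderiv (convex_feasibleSet hC) hx hy
  have hzmem := (convex_feasibleSet hC).segment_subset hx hy hz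
  rw [segment_eq_image'] at hz
  obtain ⟨s, hs, rfl⟩ := hz
  have hle := h.dotp_le_along hs.1 hzmem (norm0_sub_comm x y ▸ hK)
  rw [dotp_sub_left (G _)] at hle
  simp only [dBreg_self, Finset.sum_const_zero, mul_zero, sub_zero, sub_apply,
    smul_apply, dotpCLM_apply, smul_eq_mul] at hmvt
  have hsub : (fun i => dψ i ((x + s • (y - x)) i) - dψ i (x i)) =
    (fun i => dψ i ((x + s • (y - x)) i)) - fun i => dψ i (x i) := rfl
  rw [hsub] at hmvt
  linarith

end Growth

section Concavity

theorem concaveOn_closure {E : Type*} [AddCommGroup E] [TopologicalSpace E]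
    [IsTopologicalAddGroup E] [Module ℝ E] [ContinuousConstSMul ℝ E] {s : Set E} {f : E → ℝ}
    (hf : ConcaveOn ℝ s f) (hcont : ContinuousOn f (closure s)) : ConcaveOn ℝ (closure s) f := by
  refine ⟨hf.1.closure, fun x hx y hy a b ha hb hab => ?_⟩
  have hmaps : MapsTo (fun p : E × E => a • p.1 + b • p.2) (closure (s ×ˢ s)) (closure s) := by
    rw [closure_prod_eq]
    exact fun p hp => hf.1.closure hp.1 hp.2 ha hb hab
  have hfst : ContinuousOn (fun p : E × E => f p.1) (closure (s ×ˢ s)) :=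
    hcont.comp continuousOn_fst fun p hp => (closure_prod_eq.subset hp).1
  have hsnd : ContinuousOn (fun p : E × E => f p.2) (closure (s ×ˢ s)) :=
    hcont.comp continuousOn_snd fun p hp => (closure_prod_eq.subset hp).2
  exact le_on_closure (s := s ×ˢ s) (fun p hp => hf.2 hp.1 hp.2 ha hb hab)
    ((hfst.const_smul a).add (hsnd.const_smul b)) (hcont.comp (by fun_prop) hmaps)
    (closure_prod_eq.superset (mk_mem_prod hx hy))

theorem concaveOn_Icc_of_Ioo {f : ℝ → ℝ} {a b : ℝ} (hab : a < b) (hf : ConcaveOn ℝ (Ioo a b) f)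
    (hcont : ContinuousOn f (Icc a b)) : ConcaveOn ℝ (Icc a b) f := by
  rw [← closure_Ioo hab.ne] at hcont ⊢
  exact concaveOn_closure hf hcont

theorem lt_of_concaveOn_Icc {f : ℝ → ℝ} {a b c t : ℝ} (hf : ConcaveOn ℝ (Icc a b) f)
    (ht : t ∈ Ioo a b) (ha : c ≤ f a) (hb : c ≤ f b) (hlt : c < f a ∨ c < f b) : c < f t := by
  have hab : a ≤ b := (ht.1.trans ht.2).le
  obtain ⟨u, v, hu, hv, huv, rfl⟩ : t ∈ openSegment ℝ a b := by
    rwa [openSegment_eq_Ioo (ht.1.trans ht.2)]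
  have hconc := hf.2 (left_mem_Icc.2 hab) (right_mem_Icc.2 hab) hu.le hv.le huv
  refine lt_of_lt_of_le ?_ hconc
  calc c = u • c + v • c := (Convex.combo_self huv c).symm
    _ < u • f a + v • f b := by
      rcases hlt with hlt | hlt
      · exact add_lt_add_of_lt_of_le (smul_lt_smul_of_pos_left hlt hu)
          (smul_le_smul_of_nonneg_left hb hv.le)
      · exact add_lt_add_of_le_of_lt (smul_le_smul_of_nonneg_left ha hu.le)
          (smul_lt_smul_of_pos_left hlt hv)

theorem deriv_sub_mul_sub_nonpos_of_concaveOn {f : ℝ → ℝ} {s : Set ℝ} {x y fx fy : ℝ}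
    (hf : ConcaveOn ℝ s f) (hx : x ∈ s) (hy : y ∈ s) (hfx : HasDerivWithinAt f fx s x)
    (hfy : HasDerivWithinAt f fy s y) : (fx - fy) * (x - y) ≤ 0 := by
  rcases lt_trichotomy x y with hxy | rfl | hxy
  · have := (hf.le_slope_of_hasDerivWithinAt hx hy hxy hfy).trans
      (hf.slope_le_of_hasDerivWithinAt hx hy hxy hfx)
    exact mul_nonpos_of_nonneg_of_nonpos (sub_nonneg.2 this) (sub_neg.2 hxy).le
  · simp
  · have := (hf.le_slope_of_hasDerivWithinAt hy hx hxy hfx).trans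
      (hf.slope_le_of_hasDerivWithinAt hy hx hxy hfy)
    exact mul_nonpos_of_nonpos_of_nonneg (sub_nonpos.2 this) (sub_pos.2 hxy).le

end Concavity

section Branches

variable {C : Set ℝ} {a b α t : ℝ}

/-- `[a, b]` is one of the intervals `[0, α]` and, for `C = ℝ`, `[-α, 0]` on whose interior the
concavity condition is imposed. -/
def IsBranch (C : Set ℝ) (α a b : ℝ) : Prop :=
  (a = 0 ∧ b = α) ∨ (C = univ ∧ a = -α ∧ b = 0)

/-- A coordinate is saturated when the B-rex penalty agrees there with the `ℓ₀` penalty. -/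
def IsSaturated (α t : ℝ) : Prop :=
  t = 0 ∨ α ≤ |t|

namespace IsBranch

theorem lt (h : IsBranch C α a b) (hα : 0 < α) : a < b := by
  rcases h with ⟨rfl, rfl⟩ | ⟨-, rfl, rfl⟩ <;> linarith

theorem subset (h : IsBranch C α a b) (hC : ∀ t, 0 ≤ t → t ∈ C) : Icc a b ⊆ C := by
  rcases h with ⟨rfl, rfl⟩ | ⟨rfl, -, -⟩
  · exact fun t ht => hC t ht.1
  · exact subset_univ _

theorem abs_le (h : IsBranch C α a b) (ht : t ∈ Icc a b) : |t| ≤ α := by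
  rcases h with ⟨rfl, rfl⟩ | ⟨-, rfl, rfl⟩
  · exact (abs_of_nonneg ht.1).trans_le ht.2
  · exact (abs_of_nonpos ht.2).trans_le (neg_le.1 ht.1)

theorem exists_abs_eq (h : IsBranch C α a b) : ∃ σ : ℝ, ∀ t ∈ Icc a b, |t| = σ * t := by
  rcases h with ⟨rfl, rfl⟩ | ⟨-, rfl, rfl⟩
  · exact ⟨1, fun t ht => by rw [abs_of_nonneg ht.1, one_mul]⟩
  · exact ⟨-1, fun t ht => by rw [abs_of_nonpos ht.2, neg_one_mul]⟩

theorem isSaturated_left (h : IsBranch C α a b) : IsSaturated α a := by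
  rcases h with ⟨rfl, rfl⟩ | ⟨-, rfl, rfl⟩
  · exact .inl rfl
  · exact .inr (abs_neg α ▸ le_abs_self α)

theorem isSaturated_right (h : IsBranch C α a b) : IsSaturated α b := by
  rcases h with ⟨rfl, rfl⟩ | ⟨-, rfl, rfl⟩
  · exact .inr (le_abs_self b)
  · exact .inl rfl

end IsBranch

theorem exists_isBranch_of_abs_le {ψ dψ : ℝ → ℝ} (h : BregmanGenerator C ψ dψ) (ht : t ∈ C)
    (hle : |t| ≤ α) : ∃ a b, IsBranch C α a b ∧ t ∈ Icc a b := by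
  obtain ⟨hneg, hpos⟩ := _root_.abs_le.1 hle
  rcases h.nonneg_or_neg ht with ht0 | ⟨hC, ht0⟩
  · exact ⟨0, α, .inl ⟨rfl, rfl⟩, ht0, hpos⟩
  · exact ⟨-α, 0, .inr ⟨hC, rfl, rfl⟩, hneg, ht0.le⟩

theorem exists_isBranch_of_not_isSaturated {ψ dψ : ℝ → ℝ} (h : BregmanGenerator C ψ dψ)
    (ht : t ∈ C) (hsat : ¬IsSaturated α t) : ∃ a b, IsBranch C α a b ∧ t ∈ Ioo a b := by
  obtain ⟨h0, hα⟩ := not_or.1 hsat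
  obtain ⟨a, b, hbr, hat, htb⟩ := exists_isBranch_of_abs_le h ht (not_le.1 hα).le
  refine ⟨a, b, hbr, hat.lt_of_ne ?_, htb.lt_of_ne ?_⟩
  · rintro rfl
    exact hsat hbr.isSaturated_left
  · rintro rfl
    exact hsat hbr.isSaturated_right

end Branches

section Objective

variable {ι : Type*} [Fintype ι] {C : Set ℝ} {F : (ι → ℝ) → ℝ} {G : (ι → ℝ) → ι → ℝ}
  {ψ dψ : ι → ℝ → ℝ} {α : ι → ℝ} {lam : ℝ} {K : ℕ} {CK : ℝ} {x y : ι → ℝ}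

/-- The relaxed objective `J_Ψ = F + B_Ψ` of an arbitrary fidelity `F`. -/
def brexObjective (F : (ι → ℝ) → ℝ) (ψ dψ : ι → ℝ → ℝ) (α : ι → ℝ) (lam : ℝ) (x : ι → ℝ) : ℝ :=
  F x + ∑ i, brexPenalty (ψ i) (dψ i) (α i) lam (x i)

/-- The `ℓ₀`-penalized objective `J₀ = F + lam ‖·‖₀` of an arbitrary fidelity `F`. -/
def l0Objective (F : (ι → ℝ) → ℝ) (lam : ℝ) (x : ι → ℝ) : ℝ :=
  F x + lam * norm0 x

/-- The dual vector `z(x) = ∇Ψ(x) - ∇F(x)`, where `G` is the gradient of `F`. -/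
def dualVector (G : (ι → ℝ) → ι → ℝ) (dψ : ι → ℝ → ℝ) (x : ι → ℝ) : ι → ℝ :=
  fun i => dψ i (x i) - G x i

/-- Critical points of the relaxed objective, where `G` is the gradient of the fidelity. -/
def IsBrexCritical (C : Set ℝ) (G : (ι → ℝ) → ι → ℝ) (dψ : ι → ℝ → ℝ) (α x : ι → ℝ) : Prop :=
  x ∈ feasibleSet ι C ∧ ∀ i, dualVector G dψ x i ∈ subdiffH C (dψ i) (α i) (x i)

theorem brexObjective_le_l0Objective (hψ : ∀ i, BrexThreshold C (ψ i) (dψ i) (α i) lam)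
    (hx : x ∈ feasibleSet ι C) : brexObjective F ψ dψ α lam x ≤ l0Objective F lam x := by
  rw [brexObjective, l0Objective, mul_norm0_eq_sum]
  gcongr with i
  split_ifs with h0
  · rw [h0, (hψ i).penalty_zero]
  · exact (hψ i).penalty_le (hx i)

theorem brexObjective_eq_l0Objective (hψ : ∀ i, BrexThreshold C (ψ i) (dψ i) (α i) lam)
    (hx : x ∈ feasibleSet ι C) (hsat : ∀ i, IsSaturated (α i) (x i)) :
    brexObjective F ψ dψ α lam x = l0Objective F lam x := by
  rw [brexObjective, l0Objective, mul_norm0_eq_sum]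
  congr 1
  refine Finset.sum_congr rfl fun i _ => ?_
  split_ifs with h0
  · rw [h0, (hψ i).penalty_zero]
  · exact (hψ i).penalty_of_le_abs (hx i) ((hsat i).resolve_left h0)

theorem brexObjective_lt_of_norm0_sub_le (hψ : ∀ i, BrexThreshold C (ψ i) (dψ i) (α i) lam)
    (hF : ∀ y ∈ feasibleSet ι C, HasFDerivWithinAt F (dotpCLM (G y)) (feasibleSet ι C) y)
    (hCK : 0 < CK) (hRSC : BregmanRSCAt C G dψ K CK x) (hx : x ∈ feasibleSet ι C)
    (hsep : ∀ i, IsWellSeparated C (dψ i) (α i) CK (x i) (dualVector G dψ x i))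
    (hy : y ∈ feasibleSet ι C) (hne : y ≠ x) (hK : norm0 (x - y) ≤ K) :
    brexObjective F ψ dψ α lam x < brexObjective F ψ dψ α lam y := by
  obtain ⟨k, -⟩ := Function.ne_iff.1 hne
  have hgrowth := hRSC.growth (hψ k).strictConvexOn.1 hF (fun i => (hψ i).hasDerivWithinAt) hx hy hK
  have hsum : 0 < ∑ i, (G x i * (y i - x i) + CK * dBreg (ψ i) (dψ i) (y i) (x i)
      + (brexPenalty (ψ i) (dψ i) (α i) lam (y i)
        - brexPenalty (ψ i) (dψ i) (α i) lam (x i))) := by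
    refine sum_pos_of_ne hne (fun i hi => by simp [hi, dBreg_self]) fun i hi => ?_
    have := (hψ i).growth_pos hCK (hx i) (hsep i) (hy i) hi
    rwa [dualVector, sub_sub_cancel] at this
  rw [Finset.sum_add_distrib, Finset.sum_add_distrib, ← Finset.mul_sum,
    Finset.sum_sub_distrib] at hsum
  change F x + ∑ i, G x i * (y i - x i) + _ ≤ F y at hgrowth
  unfold brexObjective
  linarith

theorem lt_norm0_sub_of_isBrexCritical (hψ : ∀ i, BrexThreshold C (ψ i) (dψ i) (α i) lam)
    (hCK : 0 < CK) (hRSC : BregmanRSCAt C G dψ K CK x) (hx : x ∈ feasibleSet ι C)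
    (hsep : ∀ i, IsWellSeparated C (dψ i) (α i) CK (x i) (dualVector G dψ x i))
    (hy : IsBrexCritical C G dψ α y) (hne : y ≠ x) : K < norm0 (x - y) := by
  by_contra! hK
  have hrsc := hRSC y hy.1 hne.symm hK
  have hsum : 0 < ∑ i, ((dualVector G dψ x i - dualVector G dψ y i) * (x i - y i)
      - (1 - CK) * ((dψ i (x i) - dψ i (y i)) * (x i - y i))) := by
    refine sum_pos_of_ne hne (fun i hi => by simp [hi]) fun i hi => ?_
    exact sub_pos.2 ((hψ i).critical_gap hCK (hx i) (hsep i) (hy.1 i) hi (hy.2 i))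
  refine hsum.not_ge ?_
  rw [← sub_nonpos, dotp, dotp, Finset.mul_sum, ← Finset.sum_sub_distrib] at hrsc
  refine (Finset.sum_congr rfl fun i _ => ?_).trans_le hrsc
  simp only [dualVector, Pi.sub_apply]
  ring

end Objective

section CoordinatewiseConcavity

variable {ι : Type*} [DecidableEq ι] {C : Set ℝ} {J : (ι → ℝ) → ℝ} {ψ dψ : ι → ℝ → ℝ}
  {α : ι → ℝ} {x y : ι → ℝ}

/-- The concavity condition for a function `J` of several variables, up to closing the branches:
`J` is concave along every coordinate on every closed branch. -/
def IsBranchConcave (C : Set ℝ) (α : ι → ℝ) (J : (ι → ℝ) → ℝ) : Prop :=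
  ∀ y ∈ feasibleSet ι C, ∀ i a b, IsBranch C (α i) a b →
    ConcaveOn ℝ (Icc a b) fun t => J (Function.update y i t)

theorem isSaturated_update {s : Finset ι} {i : ι} {t : ℝ}
    (hy : ∀ k ∉ insert i s, IsSaturated (α k) (y k)) (ht : IsSaturated (α i) t) :
    ∀ k ∉ s, IsSaturated (α k) (Function.update y i t k) := by
  intro k hk
  rcases eq_or_ne k i with rfl | hki
  · rwa [Function.update_self]
  · rw [Function.update_of_ne hki]
    exact hy k (by simp [hki, hk])

theorem IsBranchConcave.lt_of_update_lt (hJ : IsBranchConcave C α J) {i : ι}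
    (hψ : BregmanGenerator C (ψ i) (dψ i)) (hα : 0 < α i) (hy : y ∈ feasibleSet ι C)
    (hi : ¬IsSaturated (α i) (y i))
    (hlt : ∀ t ∈ C, IsSaturated (α i) t → Function.update y i t ≠ x →
      J x < J (Function.update y i t)) : J x < J y := by
  obtain ⟨a, b, hbr, hyi⟩ := exists_isBranch_of_not_isSaturated hψ (hy i) hi
  have hab : a < b := hbr.lt hα
  have hIC : Icc a b ⊆ C := hbr.subset fun t => hψ.mem_of_nonneg
  have hJa := hlt a (hIC (left_mem_Icc.2 hab.le)) hbr.isSaturated_left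
  have hJb := hlt b (hIC (right_mem_Icc.2 hab.le)) hbr.isSaturated_right
  have hle {t : ℝ} (h : Function.update y i t ≠ x → J x < J (Function.update y i t)) :
      J x ≤ J (Function.update y i t) := by
    rcases eq_or_ne (Function.update y i t) x with heq | hne
    · exact (congrArg J heq).ge
    · exact (h hne).le
  have hends : Function.update y i a ≠ x ∨ Function.update y i b ≠ x := by
    by_contra! heq
    exact hab.ne (Function.update_injective y i (heq.1.trans heq.2.symm))
  simpa only [Function.update_eq_self] using
    lt_of_concaveOn_Icc (hJ y hy i a b hbr) hyi (hle hJa) (hle hJb) (hends.imp hJa hJb)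

theorem IsBranchConcave.lt_of_isSaturated [Finite ι] (hJ : IsBranchConcave C α J)
    (hψ : ∀ i, BregmanGenerator C (ψ i) (dψ i)) (hα : ∀ i, 0 < α i)
    (hsat : ∀ y ∈ feasibleSet ι C, (∀ i, IsSaturated (α i) (y i)) → y ≠ x → J x < J y)
    (hy : y ∈ feasibleSet ι C) (hne : y ≠ x) : J x < J y := by
  cases nonempty_fintype ι
  suffices h : ∀ s : Finset ι, ∀ y ∈ feasibleSet ι C, (∀ i ∉ s, IsSaturated (α i) (y i)) →
      y ≠ x → J x < J y from
    h Finset.univ y hy (fun i hi => absurd (Finset.mem_univ i) hi) hne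
  intro s
  induction s using Finset.induction with
  | empty => exact fun y hy hs => hsat y hy fun i => hs i (Finset.notMem_empty i)
  | insert i s _ ih =>
    intro y hy hs hne
    by_cases hi : IsSaturated (α i) (y i)
    · exact ih y hy (by simpa only [Function.update_eq_self] using isSaturated_update hs hi) hne
    · exact hJ.lt_of_update_lt (hψ i) (hα i) hy hi fun t ht hsat =>
        ih _ (update_mem_feasibleSet hy i ht) (isSaturated_update hs hsat)

end CoordinatewiseConcavity

section CoordinateDerivatives

variable {ι : Type*} [Fintype ι] [DecidableEq ι] {C : Set ℝ} {F : (ι → ℝ) → ℝ}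
  {G : (ι → ℝ) → ι → ℝ} {ψ dψ : ι → ℝ → ℝ} {α : ι → ℝ} {lam : ℝ} {K : ℕ} {CK : ℝ} {x y : ι → ℝ}

theorem sum_apply_update (f : ι → ℝ → ℝ) (y : ι → ℝ) (i : ι) (t : ℝ) :
    ∑ k, f k (Function.update y i t k) = f i t + ∑ k ∈ Finset.univ \ {i}, f k (y k) := by
  simp_rw [Function.apply_update]
  exact Finset.sum_update_of_mem (Finset.mem_univ i) _ _

theorem dotpCLM_single (v : ι → ℝ) (i : ι) : dotpCLM v (Pi.single i 1) = v i := by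
  rw [dotpCLM_apply]
  exact dotProduct_single_one v i

theorem hasDerivWithinAt_comp_update
    (hF : ∀ y ∈ feasibleSet ι C, HasFDerivWithinAt F (dotpCLM (G y)) (feasibleSet ι C) y)
    (hy : y ∈ feasibleSet ι C) (i : ι) {t : ℝ} (ht : t ∈ C) :
    HasDerivWithinAt (fun t => F (Function.update y i t)) (G (Function.update y i t) i) C t := by
  rw [← dotpCLM_single (G _) i]
  exact (hF _ (update_mem_feasibleSet hy i ht)).comp_hasDerivWithinAt t
    (hasDerivAt_update y i t).hasDerivWithinAt fun s hs => update_mem_feasibleSet hy i hs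

theorem hasDerivWithinAt_brexPenalty {ψ dψ : ℝ → ℝ} {α σ t : ℝ} {I : Set ℝ}
    (hψ : HasDerivWithinAt ψ (dψ t) I t) (hI : ∀ t ∈ I, |t| ≤ α) (hσ : ∀ t ∈ I, |t| = σ * t)
    (ht : t ∈ I) : HasDerivWithinAt (brexPenalty ψ dψ α lam) (dψ α * σ - dψ t) I t := by
  have hformula (s : ℝ) (hs : s ∈ I) :
      brexPenalty ψ dψ α lam s = ψ 0 - ψ s + dψ α * σ * s := by
    rw [brexPenalty_of_abs_le (hI s hs), hσ s hs, mul_assoc]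
  have hderiv := (hψ.const_sub (ψ 0)).fun_add
    ((hasDerivWithinAt_id t I).const_mul (dψ α * σ))
  rw [mul_one, neg_add_eq_sub] at hderiv
  exact hderiv.congr hformula (hformula t ht)

theorem hasDerivWithinAt_brexObjective_update
    (hF : ∀ y ∈ feasibleSet ι C, HasFDerivWithinAt F (dotpCLM (G y)) (feasibleSet ι C) y)
    (hy : y ∈ feasibleSet ι C) (i : ι) {σ t : ℝ} {I : Set ℝ} (hIC : I ⊆ C)
    (hψ : HasDerivWithinAt (ψ i) (dψ i t) C t) (hI : ∀ t ∈ I, |t| ≤ α i)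
    (hσ : ∀ t ∈ I, |t| = σ * t) (ht : t ∈ I) :
    HasDerivWithinAt (fun t => brexObjective F ψ dψ α lam (Function.update y i t))
      (G (Function.update y i t) i + (dψ i (α i) * σ - dψ i t)) I t := by
  simp only [brexObjective, sum_apply_update fun k => brexPenalty (ψ k) (dψ k) (α k) lam]
  exact ((hasDerivWithinAt_comp_update hF hy i (hIC ht)).mono hIC).fun_add <|
    (hasDerivWithinAt_brexPenalty (hψ.mono hIC) hI hσ ht).add_const _

theorem isBranchConcave_brexObjective (hψ : ∀ i, BrexThreshold C (ψ i) (dψ i) (α i) lam)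
    (hF : ∀ y ∈ feasibleSet ι C, HasFDerivWithinAt F (dotpCLM (G y)) (feasibleSet ι C) y)
    (hconc : ∀ y ∈ feasibleSet ι C, ∀ i a b, IsBranch C (α i) a b →
      ConcaveOn ℝ (Ioo a b) fun t => brexObjective F ψ dψ α lam (Function.update y i t)) :
    IsBranchConcave C α (brexObjective F ψ dψ α lam) := by
  intro y hy i a b hbr
  have hIC : Icc a b ⊆ C := hbr.subset fun t => (hψ i).mem_of_nonneg
  obtain ⟨σ, hσ⟩ := hbr.exists_abs_eq
  exact concaveOn_Icc_of_Ioo (hbr.lt (hψ i).pos) (hconc y hy i a b hbr) fun t ht =>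
    (hasDerivWithinAt_brexObjective_update hF hy i hIC ((hψ i).hasDerivWithinAt t (hIC ht))
      (fun _ => hbr.abs_le) hσ ht).continuousWithinAt

theorem dotp_sub_update (u x : ι → ℝ) (i : ι) (t : ℝ) :
    dotp u (x - Function.update x i t) = u i * (x i - t) := by
  rw [dotp, Finset.sum_eq_single i (fun k _ hk => by simp [Function.update_of_ne hk])
    fun hi => absurd (Finset.mem_univ i) hi, Pi.sub_apply, Function.update_self]

theorem BregmanRSCAt.le_one (hRSC : BregmanRSCAt C G dψ K CK x)
    (hψ : ∀ i, BrexThreshold C (ψ i) (dψ i) (α i) lam)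
    (hF : ∀ y ∈ feasibleSet ι C, HasFDerivWithinAt F (dotpCLM (G y)) (feasibleSet ι C) y)
    (hconc : IsBranchConcave C α (brexObjective F ψ dψ α lam)) (hx : x ∈ feasibleSet ι C)
    (hK : 1 ≤ K) {i : ι} (hi : |x i| ≤ α i) : CK ≤ 1 := by
  obtain ⟨a, b, hbr, hxi⟩ := exists_isBranch_of_abs_le (hψ i).toBregmanGenerator (hx i) hi
  have hIC : Icc a b ⊆ C := hbr.subset fun t => (hψ i).mem_of_nonneg
  have hab := hbr.lt (hψ i).pos
  obtain ⟨t, ht, hne⟩ : ∃ t ∈ Icc a b, x i ≠ t := by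
    by_contra! h
    exact hab.ne ((h a (left_mem_Icc.2 hab.le)).symm.trans (h b (right_mem_Icc.2 hab.le)))
  obtain ⟨σ, hσ⟩ := hbr.exists_abs_eq
  have hderiv {s : ℝ} (hs : s ∈ Icc a b) :=
    hasDerivWithinAt_brexObjective_update (lam := lam) hF hx i hIC
      ((hψ i).hasDerivWithinAt s (hIC hs)) (fun _ => hbr.abs_le) hσ hs
  have hanti := deriv_sub_mul_sub_nonpos_of_concaveOn (hconc x hx i a b hbr) hxi ht
    (hderiv hxi) (hderiv ht)
  rw [Function.update_eq_self] at hanti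
  have hrsc := hRSC _ (update_mem_feasibleSet hx i (hIC ht))
    (fun h => hne (by simpa using congrFun h i)) ((norm0_sub_update_le_one x i t).trans hK)
  rw [dotp_sub_update, dotp_sub_update] at hrsc
  simp only [Pi.sub_apply, Function.update_self] at hrsc
  have hpos := (hψ i).deriv_sub_mul_sub_pos (hx i) (hIC ht) hne
  exact le_of_mul_le_mul_right (by linarith) hpos

end CoordinateDerivatives

section GlobalMinimality

variable {ι : Type*} [Fintype ι] {C : Set ℝ} {F : (ι → ℝ) → ℝ} {G : (ι → ℝ) → ι → ℝ}
  {ψ dψ : ι → ℝ → ℝ} {α : ι → ℝ} {lam : ℝ} {K : ℕ} {CK : ℝ} {x y : ι → ℝ}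

theorem IsWellSeparated.isSaturated {dψ : ℝ → ℝ} {α x z : ℝ}
    (h : IsWellSeparated C dψ α CK x z) : IsSaturated α x := by
  rcases h with ⟨-, hx, -⟩ | ⟨hx, -⟩
  · exact .inl hx
  · exact .inr hx.le

theorem one_le_of_ne_of_norm0_sub_le (hne : y ≠ x) (hK : norm0 (x - y) ≤ K) : 1 ≤ K := by
  rw [norm0_sub_eq_hammingDist] at hK
  exact (hammingDist_pos.2 hne.symm).trans_le hK

theorem l0Objective_lt_of_lt_norm0_sub (hF_nonneg : 0 ≤ F y) (hlam : 0 ≤ lam)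
    (hbig : F x < lam * (1 + (K : ℝ) - 2 * norm0 x)) (hK : K < norm0 (x - y)) :
    l0Objective F lam x < l0Objective F lam y := by
  have hsupp : (1 + K : ℝ) ≤ norm0 x + norm0 y := by
    exact_mod_cast (Nat.one_add_le_iff.2 hK).trans (norm0_sub_le x y)
  have := mul_le_mul_of_nonneg_left hsupp hlam
  unfold l0Objective
  linarith

theorem isSaturated_of_isWellSeparated (hx : norm0 x < 1 + K)
    (hsep : 1 ≤ K → ∀ i, IsWellSeparated C (dψ i) (α i) CK (x i) (dualVector G dψ x i)) (i : ι) :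
    IsSaturated (α i) (x i) := by
  rcases K.eq_zero_or_pos with rfl | hK
  · rw [norm0_eq_hammingNorm, Nat.lt_one_iff, hammingNorm_eq_zero] at hx
    exact .inl (congrFun hx i)
  · exact (hsep hK i).isSaturated

theorem brexObjective_lt_of_isSaturated (hF_nonneg : 0 ≤ F y)
    (hF : ∀ y ∈ feasibleSet ι C, HasFDerivWithinAt F (dotpCLM (G y)) (feasibleSet ι C) y)
    (hψ : ∀ i, BrexThreshold C (ψ i) (dψ i) (α i) lam) (hCK : 0 < CK)
    (hRSC : BregmanRSCAt C G dψ K CK x) (hx : x ∈ feasibleSet ι C)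
    (hsep : 1 ≤ K → ∀ i, IsWellSeparated C (dψ i) (α i) CK (x i) (dualVector G dψ x i))
    (hlam : 0 ≤ lam) (hbig : F x < lam * (1 + (K : ℝ) - 2 * norm0 x))
    (hy : y ∈ feasibleSet ι C) (hsat : ∀ i, IsSaturated (α i) (y i)) (hne : y ≠ x) :
    brexObjective F ψ dψ α lam x < brexObjective F ψ dψ α lam y := by
  rcases le_or_gt (norm0 (x - y)) K with hK | hK
  · exact brexObjective_lt_of_norm0_sub_le hψ hF hCK hRSC hx
      (hsep (one_le_of_ne_of_norm0_sub_le hne hK)) hy hne hK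
  · calc brexObjective F ψ dψ α lam x ≤ l0Objective F lam x := brexObjective_le_l0Objective hψ hx
      _ < l0Objective F lam y := l0Objective_lt_of_lt_norm0_sub hF_nonneg hlam hbig hK
      _ = brexObjective F ψ dψ α lam y := (brexObjective_eq_l0Objective hψ hy hsat).symm

theorem IsBrexCritical.isWellSeparated [DecidableEq ι] (hcrit : IsBrexCritical C G dψ α x)
    (hF : ∀ y ∈ feasibleSet ι C, HasFDerivWithinAt F (dotpCLM (G y)) (feasibleSet ι C) y)
    (hψ : ∀ i, BrexThreshold C (ψ i) (dψ i) (α i) lam) (hCK : 0 < CK)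
    (hRSC : BregmanRSCAt C G dψ K CK x)
    (hconc : IsBranchConcave C α (brexObjective F ψ dψ α lam))
    (hz : ∀ i, |dualVector G dψ x i| ∉ Icc (CK * (dψ i (α i) - dψ i 0) + dψ i 0)
      ((dψ i (α i) - dψ i 0) / CK + dψ i 0)) (hK : 1 ≤ K) (i : ι) :
    IsWellSeparated C (dψ i) (α i) CK (x i) (dualVector G dψ x i) :=
  (hψ i).isWellSeparated hCK (hcrit.1 i) (hRSC.le_one hψ hF hconc hcrit.1 hK) (hcrit.2 i) (hz i)

end GlobalMinimality

theorem stmt10_general {ι : Type*} [Fintype ι] [DecidableEq ι] {C : Set ℝ} {F : (ι → ℝ) → ℝ}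
    {G : (ι → ℝ) → ι → ℝ} {ψ dψ : ι → ℝ → ℝ} {α : ι → ℝ} {lam : ℝ} {K : ℕ} {CK : ℝ} {x : ι → ℝ}
    (hF_nonneg : ∀ y ∈ feasibleSet ι C, 0 ≤ F y)
    (hF : ∀ y ∈ feasibleSet ι C, HasFDerivWithinAt F (dotpCLM (G y)) (feasibleSet ι C) y)
    (hψ : ∀ i, BrexThreshold C (ψ i) (dψ i) (α i) lam) (hCK : 0 < CK)
    (hRSC : BregmanRSCAt C G dψ K CK x)
    (hconc : ∀ y ∈ feasibleSet ι C, ∀ i a b, IsBranch C (α i) a b →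
      ConcaveOn ℝ (Ioo a b) fun t => brexObjective F ψ dψ α lam (Function.update y i t))
    (hcrit : IsBrexCritical C G dψ α x)
    (hz : ∀ i, |dualVector G dψ x i| ∉ Icc (CK * (dψ i (α i) - dψ i 0) + dψ i 0)
      ((dψ i (α i) - dψ i 0) / CK + dψ i 0))
    (hpos : 0 < 1 + (K : ℝ) - 2 * norm0 x) (hlam : F x / (1 + (K : ℝ) - 2 * norm0 x) < lam) :
    (∀ y ∈ feasibleSet ι C, y ≠ x →
      brexObjective F ψ dψ α lam x < brexObjective F ψ dψ α lam y) ∧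
    (∀ y ∈ feasibleSet ι C, y ≠ x → l0Objective F lam x < l0Objective F lam y) ∧
    (∀ y, IsBrexCritical C G dψ α y → y ≠ x → K < norm0 (y - x)) := by
  have hJ := isBranchConcave_brexObjective hψ hF hconc
  have hx := hcrit.1
  have hsep := hcrit.isWellSeparated hF hψ hCK hRSC hJ hz
  have hlam0 : 0 ≤ lam := (div_nonneg (hF_nonneg x hx) hpos.le).trans hlam.le
  have hsparse : norm0 x < 1 + K := by
    have : (0 : ℝ) ≤ norm0 x := Nat.cast_nonneg _
    exact_mod_cast (by linarith : (norm0 x : ℝ) < 1 + K)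
  have hmin : ∀ y ∈ feasibleSet ι C, y ≠ x →
      brexObjective F ψ dψ α lam x < brexObjective F ψ dψ α lam y := fun y =>
    hJ.lt_of_isSaturated (fun i => (hψ i).toBregmanGenerator) (fun i => (hψ i).pos)
      fun y hy => brexObjective_lt_of_isSaturated (hF_nonneg y hy) hF hψ hCK hRSC hx hsep hlam0
        ((div_lt_iff₀ hpos).1 hlam) hy
  refine ⟨hmin, fun y hy hne => ?_, fun y hy hne => ?_⟩
  · rw [← brexObjective_eq_l0Objective hψ hx (isSaturated_of_isWellSeparated hsparse hsep)]
    exact (hmin y hy hne).trans_le (brexObjective_le_l0Objective hψ hy)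
  · rw [norm0_sub_comm]
    by_contra! hK
    exact (lt_norm0_sub_of_isBrexCritical hψ hCK hRSC hx
      (hsep (one_le_of_ne_of_norm0_sub_le hne hK)) hy hne).not_ge hK

section Specialization

variable {M N : ℕ}

theorem PsiSetting.brexThreshold {C : Set ℝ} (P : PsiSetting N C) (hC : C = univ ∨ C = Ici 0)
    {i : Fin N} {α lam : ℝ} (hα : 0 < α) (hlam : dBreg (P.ψ i) (P.dψ i) 0 α = lam) :
    BrexThreshold C (P.ψ i) (P.dψ i) α lam where
  eq_univ_or_eq_Ici := hC
  strictConvexOn := P.hconv i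
  hasDerivWithinAt := P.hderiv i
  deriv_neg hC := P.hodd hC i
  deriv_zero_nonneg := by
    rcases hC with hC | hC
    · have := P.hodd hC i 0
      rw [neg_zero] at this
      linarith
    · exact P.hnn hC i
  pos := hα
  dBreg_zero := hlam

namespace FidSetting

variable (S : FidSetting M N) {x : Fin N → ℝ}

theorem F_nonneg (hx : x ∈ S.feas) : 0 ≤ S.F x :=
  Finset.sum_nonneg fun j _ => S.hg_nonneg j _ (interior_subset (S.hdom x hx j))

theorem gradF_eq_vecMul (x : Fin N → ℝ) :
    S.gradF x = Matrix.vecMul (fun j => S.dg j (S.A.mulVec x j)) S.A :=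
  funext fun _ => Finset.sum_congr rfl fun _ _ => mul_comm _ _

theorem dotp_gradF (x v : Fin N → ℝ) :
    dotp (S.gradF x) v = ∑ j, S.dg j (S.A.mulVec x j) * dotp (S.A j) v := by
  rw [gradF_eq_vecMul]
  exact (Matrix.dotProduct_mulVec _ S.A v).symm

theorem hasFDerivAt_F (hx : x ∈ S.feas) : HasFDerivAt S.F (dotpCLM (S.gradF x)) x := by
  have hrow (j : Fin M) : HasFDerivAt (fun y => S.A.mulVec y j) (dotpCLM (S.A j)) x :=
    (dotpCLM (S.A j)).hasFDerivAt.congr_of_eventuallyEq <| .of_forall fun y =>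
      (dotpCLM_apply (S.A j) y).symm
  have hsum : HasFDerivAt S.F (∑ j, S.dg j (S.A.mulVec x j) • dotpCLM (S.A j)) x :=
    HasFDerivAt.fun_sum fun j _ =>
      (S.hg_deriv j _ (S.hdom x hx j)).comp_hasFDerivAt x (hrow j)
  have hgrad : dotpCLM (S.gradF x) = ∑ j, S.dg j (S.A.mulVec x j) • dotpCLM (S.A j) := by
    refine ContinuousLinearMap.ext fun v => ?_
    simpa only [sum_apply, smul_apply, dotpCLM_apply, smul_eq_mul] using S.dotp_gradF x v
  rwa [hgrad]

end FidSetting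

theorem CCond.concaveOn {S : FidSetting M N} {P : PsiSetting N S.𝒞} {α : Fin N → ℝ} {lam : ℝ}
    (h : CCond S P α lam) {x : Fin N → ℝ} (hx : x ∈ S.feas) (i : Fin N) {a b : ℝ}
    (hbr : IsBranch S.𝒞 (α i) a b) :
    ConcaveOn ℝ (Ioo a b) fun t => JPsi S P α lam (Function.update x i t) := by
  rcases hbr with ⟨rfl, rfl⟩ | ⟨-, rfl, rfl⟩
  · exact (h x hx i).2.concaveOn
  · exact (h x hx i).1.concaveOn

end Specialization

/-- Theorem 4.3: under (CC) and a lower bound on `λ₀`, the sparsest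
critical point is the unique global minimizer of `J_Ψ` (and of `J₀`). -/
theorem stmt10 {M N : ℕ} (S : FidSetting M N) (P : PsiSetting N S.𝒞)
    (lam0 : ℝ) (hlam0 : 0 < lam0) (α : Fin N → ℝ)
    (hα : ∀ i, 0 < α i ∧ dBreg (P.ψ i) (P.dψ i) 0 (α i) = lam0)
    (X : Set (Fin N → ℝ)) (hXfeas : X ⊆ S.feas) (K : ℕ) (CK : ℝ) (hCK : 0 < CK)
    (hBRSC : BRSCholds S P X K CK)
    (hCC : CCond S P α lam0)
    (x : Fin N → ℝ) (hxX : x ∈ X) (hxcrit : IsCritical S P α x)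
    (hz : ∀ i, |zmap S P x i| ∉
      Set.Icc (CK * (P.dψ i (α i) - P.dψ i 0) + P.dψ i 0)
              ((P.dψ i (α i) - P.dψ i 0) / CK + P.dψ i 0))
    (hpos : 0 < 1 + (K : ℝ) - 2 * (norm0 x : ℝ))
    (hlambig : S.F x / (1 + (K : ℝ) - 2 * (norm0 x : ℝ)) < lam0) :
    (∀ x' ∈ S.feas, x' ≠ x → JPsi S P α lam0 x < JPsi S P α lam0 x') ∧
    (∀ x' ∈ S.feas, x' ≠ x → J0 S lam0 x < J0 S lam0 x') ∧
    (∀ x' : Fin N → ℝ, IsCritical S P α x' → x' ≠ x → K < norm0 (x' - x)) := by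
  exact stmt10_general (fun _ => S.F_nonneg) (fun _ hy => (S.hasFDerivAt_F hy).hasFDerivWithinAt)
    (fun i => P.brexThreshold S.h𝒞 (hα i).1 (hα i).2) hCK (hBRSC x hxX)
    (fun _ hy i _ _ => hCC.concaveOn hy i) hxcrit hz hpos hlambig
end
end
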